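/- arXiv:1306.1368 — 4 statements merged into one kernel-verified Lean document; each statement's English description precedes it below -/
import Mathlib

section
/- Let p ≥ 5 be a prime, V a d-dimensional vector space over 𝔽_p with d ≥ 1, h a linear automorphism of V, v ∈ V, and suppose the affine transformation g = t_v h has at most four cycles on V. Then one of the following holds: (1) ker(h − 1) = 0, V is a simple 𝔽_p[h]-module, orderOf h divides p^d − 1, and 3 · orderOf h ≥ p^d − 1; (2) d = 2 and there exist a nonzero scalar c ∈ 𝔽_p of order p − 1 and a unipotent automorphism u ≠ 1 with h = c · u; (3) d = 1, h = 1 and v ≠ 0; (4) d ≥ 2 and there exist h-invariant subspaces U, W with V = U ⊕ W, dim U = 1, h restricted to U the identity, W a simple 𝔽_p[h]-module, orderOf h dividing p^{d−1} − 1, 3 · orderOf h ≥ p^{d−1} − 1, and orderOf g = p · orderOf h. -/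
/-- The number of cycles (orbits of the generated cyclic group, fixed points counting as
cycles of length 1) of a permutation `g` on a subset `S`. -/
noncomputable def cyclesOn {V : Type*} (g : Equiv.Perm V) (S : Set V) : ℕ :=
  Nat.card {O : Set V // ∃ x ∈ S, O = {y | g.SameCycle x y}}

/-!
Let `F`, `W` be invariant subspaces of a linear map `h` with at most four cycles. Vectors of
`F \ W`, of `W \ F` and their sums lie in different cycles, which leaves too few cycles for `F` and
`W` to be incomparable; so the invariant subspaces of `h` form a chain.

Let `x ↦ T x + b` be a fixed-point-free affine map with fewer than `p` cycles. Its `p`-th power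
moves every point by an element of `range ((T - 1) ^ (p - 1))`, hence acts trivially modulo
`range ((T - 1) ^ 2)`, so this quotient has fewer than `p ^ 2` elements and its dimension is at most
one. Therefore `V = ker (T - 1) ⊕ range (T - 1)` with a fixed space of dimension one.

If `h` is irreducible, its powers act freely on the nonzero vectors, whose cycles therefore all have
length `orderOf h`. If it is reducible, take a maximal invariant subspace `W`: the first power
`h ^ n` returning a coset `x₀ + W` to itself acts on it as an affine map without fixed points, and
the decomposition above together with the chain condition gives `dim W = 1` and `dim V = 2`.
Finally, a fixed-point-free affine map is, after moving the origin, `h` followed by the translation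
by a fixed vector, and its restriction to the complement `range (h - 1)` falls under one of the two
linear cases, of which the second would produce a cycle for every scalar.
-/

open Equiv.Perm Module

section CycleCounting

variable {α β ι : Type*} {g : Equiv.Perm α}

lemma cyclesOn_univ (g : Equiv.Perm α) :
    cyclesOn g Set.univ = Nat.card (Quotient (SameCycle.setoid g)) := by
  have hclasses : {O : Set α | ∃ x ∈ Set.univ, O = {y | g.SameCycle x y}} =
      (SameCycle.setoid g).classes := by
    have hcomm (x : α) : {y | g.SameCycle x y} = {y | g.SameCycle y x} :=
      Set.ext fun y => sameCycle_comm
    simp only [Set.mem_univ, true_and, hcomm]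
    rfl
  exact Nat.card_congr ((Equiv.setCongr hclasses).trans (Setoid.quotientEquivClasses _).symm)

variable [Finite α]

lemma natCard_le_cyclesOn (a : ι → α) (ha : ∀ i j, g.SameCycle (a i) (a j) → i = j) :
    Nat.card ι ≤ cyclesOn g Set.univ := by
  rw [cyclesOn_univ]
  exact Nat.card_le_card_of_injective (fun i => Quotient.mk (SameCycle.setoid g) (a i))
    fun i j hij => ha i j (Quotient.exact hij)

lemma length_le_cyclesOn {l : List α} (hl : l.Pairwise fun x y => ¬ g.SameCycle x y) :
    l.length ≤ cyclesOn g Set.univ := by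
  rw [← Nat.card_fin l.length]
  refine natCard_le_cyclesOn l.get fun i j hij => ?_
  rw [List.pairwise_iff_get] at hl
  rcases lt_trichotomy i j with hlt | heq | hgt
  · exact absurd hij (hl i j hlt)
  · exact heq
  · exact absurd hij.symm (hl j i hgt)

lemma cyclesOn_le_cyclesOn {γ : Equiv.Perm β} (f : β → α)
    (hf : ∀ x y, g.SameCycle (f x) (f y) → γ.SameCycle x y) :
    cyclesOn γ Set.univ ≤ cyclesOn g Set.univ := by
  rw [cyclesOn_univ γ]
  refine natCard_le_cyclesOn (fun c => f c.out) fun c d hcd => ?_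
  rw [← c.out_eq, ← d.out_eq]
  exact Quotient.sound (hf _ _ hcd)

lemma natCard_le_cyclesOn_mul {π : α → β} (hπ : Function.Surjective π) {m : ℕ} (hm : 0 < m)
    (hg : ∀ x, π ((g ^ m) x) = π x) : Nat.card β ≤ cyclesOn g Set.univ * m := by
  have hperiod (q : ℕ) (x : α) : π (((g ^ m) ^ q) x) = π x := by
    induction q with
    | zero => rfl
    | succ q ih => rw [pow_succ', Equiv.Perm.mul_apply, hg, ih]
  rw [cyclesOn_univ, ← Nat.card_fin m, ← Nat.card_prod]
  refine Nat.card_le_card_of_surjective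
    (fun c : Quotient (SameCycle.setoid g) × Fin m => π ((g ^ (c.2 : ℕ)) c.1.out)) fun y => ?_
  obtain ⟨x, rfl⟩ := hπ y
  set c := Quotient.mk (SameCycle.setoid g) x
  obtain ⟨k, hk⟩ : ∃ k : ℕ, (g ^ k) c.out = x :=
    SameCycle.exists_nat_pow_eq (Quotient.exact c.out_eq)
  refine ⟨⟨c, k % m, Nat.mod_lt k hm⟩, ?_⟩
  rw [← hk, ← Nat.div_add_mod k m, pow_add, pow_mul, Equiv.Perm.mul_apply, hperiod, Nat.div_add_mod]

end CycleCounting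

section LinearCycles

variable {R V : Type*} [Ring R] [AddCommGroup V] [Module R V] {h : V ≃ₗ[R] V}
  {F W : Submodule R V} {x e : V}

lemma pow_apply_mem (hW : W ∈ End.invtSubmodule (h : End R V)) (k : ℕ) (hx : x ∈ W) :
    (h ^ k) x ∈ W := by
  rw [LinearEquiv.pow_apply]
  exact Set.MapsTo.iterate hW k hx

lemma even_of_pow_apply_eq_self (hneg : h x = -x) (hx : x ≠ -x) {m : ℕ} (hm : (h ^ m) x = x) :
    Even m := by
  have htwo : Function.IsPeriodicPt h 2 x := by
    simp [Function.IsPeriodicPt, Function.IsFixedPt, hneg]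
  have hper : Function.IsPeriodicPt h m x := by rwa [LinearEquiv.pow_apply] at hm
  by_contra hodd
  have hgcd := htwo.gcd hper
  rw [Nat.coprime_two_left.mpr (Nat.not_even_iff_odd.mp hodd)] at hgcd
  exact hx (hgcd.eq.symm.trans hneg)

lemma pow_apply_ne_neg_of_pow_apply_eq_neg (hx : x ≠ -x) (he : e ≠ -e) {k l : ℕ}
    (hkx : (h ^ k) x = x) (hke : (h ^ k) e = -e) (hle : (h ^ l) e = e) : (h ^ l) x ≠ -x := by
  intro hlx
  obtain ⟨k', l', hcop, hk, hl⟩ := Nat.exists_coprime k l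
  have hlcm : l * k' = k * l' := by
    generalize k.gcd l = d at hk hl
    rw [hk, hl]
    ring
  have hcomm : (h ^ l) ^ k' = (h ^ k) ^ l' := by rw [← pow_mul, ← pow_mul, hlcm]
  have hfix {f : V ≃ₗ[R] V} {y : V} (hy : f y = y) (m : ℕ) : (f ^ m) y = y := by
    rw [LinearEquiv.pow_apply]; exact Function.iterate_fixed hy m
  have hk_even : Even k' := even_of_pow_apply_eq_self hlx hx (by rw [hcomm, hfix hkx])
  have hl_even : Even l' := even_of_pow_apply_eq_self hke he (by rw [← hcomm, hfix hle])
  exact Nat.not_coprime_of_dvd_of_dvd one_lt_two hk_even.two_dvd hl_even.two_dvd hcop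

variable [Finite V]

lemma sameCycle_toEquiv_iff {y : V} : SameCycle h.toEquiv x y ↔ ∃ k : ℕ, (h ^ k) x = y := by
  have hpow (k : ℕ) : (h.toEquiv ^ k : Equiv.Perm V) x = (h ^ k) x := by
    rw [Equiv.Perm.coe_pow, LinearEquiv.coe_pow]; rfl
  exact ⟨fun hxy => by simpa only [hpow] using SameCycle.exists_nat_pow_eq hxy,
    fun ⟨k, hk⟩ => ⟨k, by rwa [zpow_natCast, hpow]⟩⟩

lemma sameCycle_of_cyclesOn_lt_five (hcyc : cyclesOn h.toEquiv Set.univ < 5) {a b c d : V}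
    (ha : a ≠ 0) (hb : b ≠ 0) (hc : c ≠ 0) (hd : d ≠ 0) :
    (∃ k : ℕ, (h ^ k) a = b) ∨ (∃ k : ℕ, (h ^ k) a = c) ∨ (∃ k : ℕ, (h ^ k) a = d) ∨
      (∃ k : ℕ, (h ^ k) b = c) ∨ (∃ k : ℕ, (h ^ k) b = d) ∨ (∃ k : ℕ, (h ^ k) c = d) := by
  have hzero {x : V} (hx : x ≠ 0) : ¬ SameCycle h.toEquiv 0 x := fun h0x =>
    hx (h0x.eq_of_left (map_zero h)).symm
  by_contra hdistinct
  simp only [← sameCycle_toEquiv_iff, not_or] at hdistinct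
  refine hcyc.not_ge (length_le_cyclesOn (l := [0, a, b, c, d]) ?_)
  simp [*]

lemma exists_pow_apply_eq_self_and_eq_neg (hcyc : cyclesOn h.toEquiv Set.univ < 5)
    (hF : F ∈ End.invtSubmodule (h : End R V)) (hW : W ∈ End.invtSubmodule (h : End R V))
    (hdisj : Disjoint F W) (hxF : x ∈ F) (hx : x ≠ 0) (heW : e ∈ W) (he : e ≠ 0) :
    ∃ k : ℕ, (h ^ k) x = x ∧ (h ^ k) e = -e := by
  have hxW : x ∉ W := fun hxW => hx (Submodule.disjoint_def.mp hdisj x hxF hxW)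
  have heF : e ∉ F := fun heF => he (Submodule.disjoint_def.mp hdisj e heF heW)
  have hadd : x + e ≠ 0 := fun h0 => hxW (by rw [eq_neg_of_add_eq_zero_left h0]; exact neg_mem heW)
  have hsub : x - e ≠ 0 := fun h0 => hxW (sub_eq_zero.mp h0 ▸ heW)
  rcases sameCycle_of_cyclesOn_lt_five hcyc hx he hadd hsub with
    ⟨k, hk⟩ | ⟨k, hk⟩ | ⟨k, hk⟩ | ⟨k, hk⟩ | ⟨k, hk⟩ | ⟨k, hk⟩
  · exact absurd (hk ▸ pow_apply_mem hF k hxF) heF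
  · exact absurd ((F.add_mem_iff_right hxF).mp (hk ▸ pow_apply_mem hF k hxF)) heF
  · exact absurd ((F.sub_mem_iff_right hxF).mp (hk ▸ pow_apply_mem hF k hxF)) heF
  · exact absurd ((W.add_mem_iff_left heW).mp (hk ▸ pow_apply_mem hW k heW)) hxW
  · exact absurd ((W.sub_mem_iff_left heW).mp (hk ▸ pow_apply_mem hW k heW)) hxW
  · have hcross : (h ^ k) x - x = -e - (h ^ k) e := by
      rw [sub_eq_sub_iff_add_eq_add, ← map_add, hk, neg_add_eq_sub]
    have hzero : (h ^ k) x - x = 0 := Submodule.disjoint_def.mp hdisj _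
      (sub_mem (pow_apply_mem hF k hxF) hxF)
      (hcross ▸ sub_mem (neg_mem heW) (pow_apply_mem hW k heW))
    exact ⟨k, sub_eq_zero.mp hzero, (sub_eq_zero.mp (hcross ▸ hzero)).symm⟩

/-- Vectors `x ∈ F \ W` and `e ∈ W \ F` lie in different cycles from each other and from their
sums; a common nonzero vector would be a fourth nonzero cycle, and without one some power of `h`
acts as `(1, -1)` and another as `(-1, 1)` on `(x, e)`. -/
lemma invtSubmodule_le_total (h2 : IsUnit (2 : R)) (hcyc : cyclesOn h.toEquiv Set.univ < 5)
    (hF : F ∈ End.invtSubmodule (h : End R V)) (hW : W ∈ End.invtSubmodule (h : End R V)) :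
    F ≤ W ∨ W ≤ F := by
  by_contra! hnot
  obtain ⟨x, hxF, hxW⟩ := SetLike.not_le_iff_exists.mp hnot.1
  obtain ⟨e, heW, heF⟩ := SetLike.not_le_iff_exists.mp hnot.2
  have hx : x ≠ 0 := fun h0 => hxW (h0 ▸ W.zero_mem)
  have he : e ≠ 0 := fun h0 => heF (h0 ▸ F.zero_mem)
  have hne_neg {y : V} (hy : y ≠ 0) : y ≠ -y := fun h0 => hy <| by
    rw [← h2.smul_eq_zero, two_smul]
    exact eq_neg_iff_add_eq_zero.mp h0
  have hdisj : Disjoint F W := by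
    refine Submodule.disjoint_def.mpr fun f hfF hfW => by_contra fun hf => ?_
    have hadd : x + e ≠ 0 := fun h0 =>
      hxW (by rw [eq_neg_of_add_eq_zero_left h0]; exact neg_mem heW)
    rcases sameCycle_of_cyclesOn_lt_five hcyc hf hx he hadd with
      ⟨k, hk⟩ | ⟨k, hk⟩ | ⟨k, hk⟩ | ⟨k, hk⟩ | ⟨k, hk⟩ | ⟨k, hk⟩
    · exact hxW (hk ▸ pow_apply_mem hW k hfW)
    · exact heF (hk ▸ pow_apply_mem hF k hfF)
    · exact hxW ((W.add_mem_iff_left heW).mp (hk ▸ pow_apply_mem hW k hfW))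
    · exact heF (hk ▸ pow_apply_mem hF k hxF)
    · exact heF ((F.add_mem_iff_right hxF).mp (hk ▸ pow_apply_mem hF k hxF))
    · exact hxW ((W.add_mem_iff_left heW).mp (hk ▸ pow_apply_mem hW k heW))
  obtain ⟨k, hkx, hke⟩ := exists_pow_apply_eq_self_and_eq_neg hcyc hF hW hdisj hxF hx heW he
  obtain ⟨l, hle, hlx⟩ := exists_pow_apply_eq_self_and_eq_neg hcyc hW hF hdisj.symm heW he hxF hx
  exact pow_apply_ne_neg_of_pow_apply_eq_neg (hne_neg hx) (hne_neg he) hkx hke hle hlx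

end LinearCycles

section CommutingEndomorphisms

variable {R V : Type*} [Ring R] [AddCommGroup V] [Module R V] {h : V ≃ₗ[R] V}

lemma coe_pow_eq_pow_coe (h : V ≃ₗ[R] V) (k : ℕ) :
    ((h ^ k : V ≃ₗ[R] V) : End R V) = (h : End R V) ^ k :=
  map_pow (LinearEquiv.automorphismGroup.toLinearMapMonoidHom (R := R) (M := V)) h k

lemma pow_apply_apply_comm {N : End R V} (hN : Commute N (h : End R V)) (k : ℕ) (x : V) :
    (h ^ k) (N x) = N ((h ^ k) x) := by
  have := LinearMap.congr_fun (hN.pow_right k).eq x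
  rw [← coe_pow_eq_pow_coe] at this
  exact this.symm

lemma commute_pow_sub_one (h : V ≃ₗ[R] V) (n : ℕ) :
    Commute (((h ^ n : V ≃ₗ[R] V) : End R V) - 1) (h : End R V) := by
  rw [coe_pow_eq_pow_coe]
  exact ((Commute.refl _).pow_left n).sub_left (Commute.one_left _)

lemma ker_mem_invtSubmodule {N : End R V} (hN : Commute N (h : End R V)) :
    LinearMap.ker N ∈ End.invtSubmodule (h : End R V) := fun x (hx : N x = 0) => by
  change (N * h) x = 0
  rw [hN.eq, Module.End.mul_apply, hx, map_zero]

lemma range_mem_invtSubmodule {N : End R V} (hN : Commute N (h : End R V)) :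
    LinearMap.range N ∈ End.invtSubmodule (h : End R V) := by
  rintro _ ⟨y, rfl⟩
  exact ⟨h y, LinearMap.congr_fun hN.eq y⟩

/-- Schur's lemma relative to a maximal invariant subspace `W`; for `W = ⊥` it is the usual one. -/
lemma apply_mem_of_maximal {W : Submodule R V} (hW : W ∈ End.invtSubmodule (h : End R V))
    (hmax : ∀ W' ∈ End.invtSubmodule (h : End R V), W ≤ W' → W' = W ∨ W' = ⊤) {N : End R V}
    (hN : Commute N (h : End R V)) (hNW : W ≤ W.comap N) {x : V} (hx : x ∉ W) (hNx : N x ∈ W)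
    (z : V) : N z ∈ W := by
  have hcomap : W.comap N ∈ End.invtSubmodule (h : End R V) := fun y (hy : N y ∈ W) => by
    change (N * h) y ∈ W
    rw [hN.eq]
    exact hW hy
  rcases hmax _ hcomap hNW with heq | htop
  · exact absurd (heq ▸ hNx : x ∈ W) hx
  · exact (htop ▸ Submodule.mem_top : z ∈ W.comap N)

lemma eq_one_of_apply_eq_self
    (hirr : ∀ W ∈ End.invtSubmodule (h : End R V), W = ⊥ ∨ W = ⊤) {f : V ≃ₗ[R] V}
    (hf : Commute f h) {x : V} (hx : x ≠ 0) (hfx : f x = x) : f = 1 := by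
  have hcomm : Commute ((f : End R V) - 1) (h : End R V) :=
    (hf.map (LinearEquiv.automorphismGroup.toLinearMapMonoidHom (R := R) (M := V))).sub_left
      (Commute.one_left _)
  rcases hirr _ (ker_mem_invtSubmodule hcomm) with hker | hker
  · exact absurd ((Submodule.eq_bot_iff _).mp hker x (by simp [hfx])) hx
  · ext y
    exact sub_eq_zero.mp (LinearMap.congr_fun (LinearMap.ker_eq_top.mp hker) y)

end CommutingEndomorphisms

section Restriction

variable {K V : Type*} [Field K] [AddCommGroup V] [Module K V] [FiniteDimensional K V]
  {h : V ≃ₗ[K] V} {W : Submodule K V}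

/-- The automorphism induced by `h` on an `h`-invariant subspace. -/
noncomputable def restrictEquiv (hW : W ∈ End.invtSubmodule (h : End K V)) : W ≃ₗ[K] W :=
  LinearEquiv.ofInjectiveEndo ((h : End K V).restrict hW)
    fun _ _ hxy => Subtype.ext (h.injective (congrArg Subtype.val hxy))

@[simp]
lemma coe_restrictEquiv_apply (hW : W ∈ End.invtSubmodule (h : End K V)) (x : W) :
    (restrictEquiv hW x : V) = h x := rfl

@[simp]
lemma coe_restrictEquiv_pow_apply (hW : W ∈ End.invtSubmodule (h : End K V)) (k : ℕ) (x : W) :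
    ((restrictEquiv hW ^ k) x : V) = (h ^ k) x := by
  induction k with
  | zero => rfl
  | succ k ih => rw [pow_succ', pow_succ', LinearEquiv.mul_apply, coe_restrictEquiv_apply, ih,
      LinearEquiv.mul_apply]

lemma cyclesOn_restrictEquiv_le [Finite V] (hW : W ∈ End.invtSubmodule (h : End K V)) :
    cyclesOn (restrictEquiv hW).toEquiv Set.univ ≤ cyclesOn h.toEquiv Set.univ :=
  cyclesOn_le_cyclesOn Subtype.val fun x y hxy => by
    obtain ⟨k, hk⟩ := sameCycle_toEquiv_iff.mp hxy
    exact sameCycle_toEquiv_iff.mpr ⟨k, Subtype.ext (by simpa using hk)⟩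

lemma orderOf_restrictEquiv_of_codisjoint (hW : W ∈ End.invtSubmodule (h : End K V))
    (hcod : Codisjoint (LinearMap.ker ((h : End K V) - 1)) W) :
    orderOf (restrictEquiv hW) = orderOf h := by
  refine orderOf_eq_orderOf_iff.mpr fun k => ⟨fun hk => ?_, fun hk => ?_⟩
  · ext x
    obtain ⟨y, z, hy, hz, rfl⟩ := Submodule.codisjoint_iff_exists_add_eq.mp hcod x
    have hyk : (h ^ k) y = y := by
      rw [LinearEquiv.pow_apply]
      exact Function.iterate_fixed (sub_eq_zero.mp hy) k
    have hzk := congrArg Subtype.val (LinearEquiv.congr_fun hk ⟨z, hz⟩)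
    rw [coe_restrictEquiv_pow_apply] at hzk
    rw [map_add, hyk, hzk]
    rfl
  · ext x
    rw [coe_restrictEquiv_pow_apply, hk]
    rfl

end Restriction

section ScalarShifts

variable {R V : Type*} [CommRing R] [AddCommGroup V] [Module R V] {h : V ≃ₗ[R] V} {c : R}

lemma pow_apply_eq_pow_smul {x : V} (hx : h x = c • x) (k : ℕ) : (h ^ k) x = c ^ k • x := by
  induction k with
  | zero => simp
  | succ k ih => rw [pow_succ', LinearEquiv.mul_apply, ih, map_smul, hx, smul_smul, pow_succ]

lemma commute_sub_smul_one (h : V ≃ₗ[R] V) (c : R) :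
    Commute ((h : End R V) - c • 1) (h : End R V) :=
  (Commute.refl _).sub_left ((Commute.one_left _).smul_left c)

lemma exists_sub_smul_one_apply_ne_zero {T : End R V} (hT : T ≠ c • 1) :
    ∃ x, (T - c • 1) x ≠ 0 := by
  by_contra! hzero
  exact hT (sub_eq_zero.mp (LinearMap.ext hzero))

lemma sub_smul_one_sq_eq_zero {n : ℕ}
    (hrange : LinearMap.range (((h ^ n : V ≃ₗ[R] V) : End R V) - 1) ≤
      LinearMap.ker ((h : End R V) - c • 1))
    (hker : LinearMap.ker (((h ^ n : V ≃ₗ[R] V) : End R V) - 1) ≤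
      LinearMap.ker ((h : End R V) - c • 1)) : ((h : End R V) - c • 1) ^ 2 = 0 := by
  rw [pow_two]
  refine LinearMap.ext fun z => hker (sub_eq_zero.mpr ?_)
  refine (pow_apply_apply_comm (commute_sub_smul_one h c) n z).trans (sub_eq_zero.mp ?_)
  rw [Module.End.one_apply, ← map_sub]
  exact hrange ⟨z, rfl⟩

end ScalarShifts

section Eigenvalues

variable {K V : Type*} [Field K] [AddCommGroup V] [Module K V] {h : V ≃ₗ[K] V} {c : K}

lemma natCast_eq_zero_of_pow_apply_eq_self (hsq : ((h : End K V) - c • 1) ^ 2 = 0) {x : V}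
    (hx : ((h : End K V) - c • 1) x ≠ 0) {k : ℕ} (hk : (h ^ k) x = x) : (k : K) = 0 := by
  set D := (h : End K V) - c • 1
  have hhx : h x = c • x + D x := by simp [D]
  have heig : h (D x) = c • D x := sub_eq_zero.mp <| by
    have := LinearMap.congr_fun hsq x
    rwa [pow_two] at this
  have hpow (m : ℕ) : c • (h ^ m) x = c ^ (m + 1) • x + (m * c ^ m) • D x := by
    induction m with
    | zero => simp
    | succ m ih =>
      rw [pow_succ', LinearEquiv.mul_apply, ← map_smul, ih, map_add, map_smul, map_smul, hhx, heig]
      push_cast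
      module
  have hck : c ^ k = 1 := smul_left_injective K hx <| by
    simp only [← pow_apply_eq_pow_smul heig]
    rw [pow_apply_apply_comm (commute_sub_smul_one h c), hk, one_smul]
  have hzero := hpow k
  rw [hk, pow_succ, hck, one_mul, mul_one, left_eq_add] at hzero
  exact (smul_eq_zero.mp hzero).resolve_right hx

lemma ne_zero_of_sub_smul_one_sq_eq_zero (hsq : ((h : End K V) - c • 1) ^ 2 = 0)
    (hne : (h : End K V) ≠ c • 1) : c ≠ 0 := by
  rintro rfl
  obtain ⟨x, hx⟩ := exists_sub_smul_one_apply_ne_zero hne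
  exact hx (by simpa [pow_two] using LinearMap.congr_fun hsq x)

lemma orderOf_eq_natCard_sub_one [Finite K] (hc : c ≠ 0) (hpow : ∀ l : Kˣ, ∃ k : ℕ, c ^ k = l) :
    orderOf c = Nat.card K - 1 := by
  rw [← Nat.card_units, ← orderOf_eq_card_of_forall_mem_zpowers (g := Units.mk0 c hc),
    ← orderOf_units, Units.val_mk0]
  intro l
  obtain ⟨k, hk⟩ := hpow l
  exact ⟨k, Units.ext (by simpa using hk)⟩

variable [Finite V]

lemma natCard_le_natCard_of_ne_bot {W : Submodule K V} (hW : W ≠ ⊥) :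
    Nat.card K ≤ Nat.card W := by
  rw [Module.natCard_eq_pow_finrank (K := K) (V := W)]
  exact Nat.le_self_pow (Nat.one_le_iff_ne_zero.mp (Submodule.one_le_finrank_iff.mpr hW)) _

lemma ker_sub_one_eq_bot (hcyc : cyclesOn h.toEquiv Set.univ < Nat.card K) :
    LinearMap.ker ((h : End K V) - 1) = ⊥ := by
  by_contra hne
  have hfixed := natCard_le_cyclesOn (g := h.toEquiv)
    (Subtype.val : LinearMap.ker ((h : End K V) - 1) → V)
    fun x y hxy => Subtype.ext (hxy.eq_of_left (sub_eq_zero.mp x.2))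
  exact hcyc.not_ge ((natCard_le_natCard_of_ne_bot hne).trans hfixed)

lemma exists_pow_eq_of_sq_eq_zero (hcyc : cyclesOn h.toEquiv Set.univ < 5)
    (hsq : ((h : End K V) - c • 1) ^ 2 = 0) (hne : (h : End K V) ≠ c • 1) (l : Kˣ) :
    ∃ k : ℕ, c ^ k = l := by
  set D := (h : End K V) - c • 1
  have hcomm (k : ℕ) (y : V) : (h ^ k) (D y) = D ((h ^ k) y) :=
    pow_apply_apply_comm (commute_sub_smul_one h c) k y
  obtain ⟨x, hx⟩ := exists_sub_smul_one_apply_ne_zero hne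
  have hDD : D (D x) = 0 := by rw [← Module.End.mul_apply, ← pow_two, hsq, LinearMap.zero_apply]
  have hkill {a : K} {k : ℕ} : D ((h ^ k) (a • D x)) = 0 := by
    rw [← hcomm, map_smul, hDD, smul_zero, map_zero]
  have hx0 : x ≠ 0 := fun h0 => hx (by rw [h0, map_zero])
  have hlx : D ((l : K) • x) ≠ 0 := by
    rw [map_smul]
    exact smul_ne_zero l.ne_zero hx
  have hcancel {k : ℕ} (hk : (h ^ k) (D x) = (l : K) • D x) : c ^ k = l := by
    rw [pow_apply_eq_pow_smul (sub_eq_zero.mp hDD)] at hk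
    exact smul_left_injective K hx hk
  rcases sameCycle_of_cyclesOn_lt_five hcyc hx (smul_ne_zero l.ne_zero hx) hx0
    (smul_ne_zero l.ne_zero hx0) with
    ⟨k, hk⟩ | ⟨k, hk⟩ | ⟨k, hk⟩ | ⟨k, hk⟩ | ⟨k, hk⟩ | ⟨k, hk⟩
  · exact ⟨k, hcancel hk⟩
  · exact absurd (hk ▸ one_smul K (D x) ▸ hkill) hx
  · exact absurd (hk ▸ one_smul K (D x) ▸ hkill) hlx
  · exact absurd (hk ▸ hkill) hx
  · exact absurd (hk ▸ hkill) hlx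
  · exact ⟨k, hcancel (by rw [hcomm, hk, map_smul])⟩

end Eigenvalues

section FixedPointFreeAffineMaps

lemma char_dvd_natCard (R : Type*) [Ring R] [Finite R] (p : ℕ) [CharP R p] : p ∣ Nat.card R := by
  have := Fintype.ofFinite R
  rw [← CharP.cast_eq_zero_iff R p, Nat.card_eq_fintype_card, Nat.cast_card_eq_zero]

lemma char_le_natCard (R : Type*) [Ring R] [Finite R] (p : ℕ) [CharP R p] : p ≤ Nat.card R :=
  Nat.le_of_dvd Nat.card_pos (char_dvd_natCard R p)

lemma coprime_of_dvd_natCard_pow_sub_one {R : Type*} [Ring R] [Finite R] {p : ℕ} [CharP R p]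
    {m n : ℕ} (hm : m ≠ 0) (hn : n ∣ Nat.card R ^ m - 1) : p.Coprime n := by
  have hpos : 1 ≤ Nat.card R ^ m := Nat.one_le_pow _ _ Nat.card_pos
  exact (((Nat.coprime_self_sub_right hpos).mpr (Nat.coprime_one_right _)).coprime_dvd_left
    (dvd_pow (char_dvd_natCard R p) hm)).coprime_dvd_right hn

lemma isUnit_two_of_three_le_char (K : Type*) [Field K] (p : ℕ) [CharP K p] (hp : 3 ≤ p) :
    IsUnit (2 : K) :=
  IsUnit.mk0 2 (Ring.two_ne_zero (by rw [ringChar.eq K p]; omega))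

open Polynomial in
lemma sum_range_pow_eq_sub_one_pow (K : Type*) {A : Type*} [CommRing K] (p : ℕ) [Fact p.Prime]
    [CharP K p] [Ring A] [Algebra K A] (a : A) :
    ∑ i ∈ Finset.range p, a ^ i = (a - 1) ^ (p - 1) := by
  have hX : ∑ i ∈ Finset.range p, (X : K[X]) ^ i = (X - 1) ^ (p - 1) := by
    have hp := cyclotomic_mul_prime_eq_pow_of_not_dvd K (Fact.out : p.Prime).not_dvd_one
    rwa [one_mul, cyclotomic_prime, cyclotomic_one] at hp
  simpa using congrArg (aeval a) hX

variable {K V : Type*} [Field K] [AddCommGroup V] [Module K V]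

lemma isCompl_ker_range_of_range_sq_eq [FiniteDimensional K V] {M : End K V}
    (hM : LinearMap.range (M ^ 2) = LinearMap.range M) :
    IsCompl (LinearMap.ker M) (LinearMap.range M) := by
  have hker : LinearMap.ker M = LinearMap.ker (M ^ 2) := by
    refine Submodule.eq_of_le_of_finrank_eq ?_ ?_
    · rw [pow_two]
      exact LinearMap.ker_le_ker_comp M M
    have h1 := LinearMap.finrank_range_add_finrank_ker M
    have h2 := LinearMap.finrank_range_add_finrank_ker (M ^ 2)
    rw [hM] at h2
    omega
  refine (Submodule.isCompl_iff_disjoint _ _ ?_).mpr (Submodule.disjoint_def.mpr ?_)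
  · rw [add_comm, LinearMap.finrank_range_add_finrank_ker]
  · rintro _ hx ⟨y, rfl⟩
    rw [LinearMap.mem_ker, ← Module.End.mul_apply, ← pow_two, ← LinearMap.mem_ker, ← hker] at hx
    exact hx

variable {g : Equiv.Perm V} {T : End K V} {b : V}

lemma affine_pow_apply (hg : ∀ x, g x = T x + b) (k : ℕ) (x : V) :
    (g ^ k) x = x + (∑ i ∈ Finset.range k, T ^ i) (g x - x) := by
  induction k with
  | zero => simp
  | succ k ih =>
    have hshift : g ((g ^ k) x) = g x + T ((g ^ k) x - x) := by rw [hg, hg, map_sub]; abel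
    rw [pow_succ', Equiv.Perm.mul_apply, hshift, ih, add_sub_cancel_left,
      ← Module.End.mul_apply, Finset.sum_range_succ', Finset.mul_sum]
    simp only [← pow_succ', LinearMap.add_apply, pow_zero, Module.End.one_apply]
    abel

variable (p : ℕ) [Fact p.Prime] [CharP K p]

lemma affine_pow_char_apply_sub_mem (hp : 3 ≤ p) (hg : ∀ x, g x = T x + b) (x : V) :
    (g ^ p) x - x ∈ LinearMap.range ((T - 1) ^ 2) := by
  rw [affine_pow_apply hg, add_sub_cancel_left, sum_range_pow_eq_sub_one_pow K p T,
    ← Nat.add_sub_of_le (show 2 ≤ p - 1 by omega), pow_add, Module.End.mul_apply]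
  exact LinearMap.mem_range_self _ _

variable [Finite K] [Finite V]

lemma isCompl_ker_range_of_fixedPointFree (hp : 3 ≤ p) (hcyc : cyclesOn g Set.univ < p)
    (hg : ∀ x, g x = T x + b) (hfix : ∀ x, g x ≠ x) :
    IsCompl (LinearMap.ker (T - 1)) (LinearMap.range (T - 1)) ∧
      finrank K (LinearMap.ker (T - 1)) = 1 := by
  have hrange_le : LinearMap.range ((T - 1) ^ 2) ≤ LinearMap.range (T - 1) := by
    rw [pow_two]; exact LinearMap.range_comp_le_range _ _
  have hrange_ne : LinearMap.range (T - 1) ≠ ⊤ := by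
    intro htop
    obtain ⟨y, hy⟩ := LinearMap.range_eq_top.mp htop b
    refine hfix (-y) ?_
    rw [hg, ← hy, LinearMap.sub_apply, Module.End.one_apply, map_neg]
    abel
  have hquot : finrank K (V ⧸ LinearMap.range ((T - 1) ^ 2)) < 2 := by
    have hp0 : 0 < p := (Fact.out : p.Prime).pos
    have hcard := natCard_le_cyclesOn_mul (Submodule.mkQ_surjective (LinearMap.range ((T - 1) ^ 2)))
      hp0 fun x => (Submodule.Quotient.eq _).mpr (affine_pow_char_apply_sub_mem p hp hg x)
    rw [Module.natCard_eq_pow_finrank (K := K)] at hcard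
    refine (Nat.pow_lt_pow_iff_right (Finite.one_lt_card (α := K))).mp ?_
    calc _ ≤ cyclesOn g Set.univ * p := hcard
      _ < p * p := Nat.mul_lt_mul_of_pos_right hcyc hp0
      _ ≤ Nat.card K ^ 2 := by
        rw [pow_two]; exact Nat.mul_le_mul (char_le_natCard K p) (char_le_natCard K p)
  have hrank_lt := Submodule.finrank_lt hrange_ne
  have hrank_sq := Submodule.finrank_quotient_add_finrank (LinearMap.range ((T - 1) ^ 2))
  have hrank := LinearMap.finrank_range_add_finrank_ker (T - 1)
  have hrange : LinearMap.range ((T - 1) ^ 2) = LinearMap.range (T - 1) :=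
    Submodule.eq_of_le_of_finrank_le hrange_le (by omega)
  rw [hrange] at hrank_sq hquot
  exact ⟨isCompl_ker_range_of_range_sq_eq hrange, by omega⟩

end FixedPointFreeAffineMaps

section CosetReturn

variable {R V : Type*} [Ring R] [AddCommGroup V] [Module R V] {h : V ≃ₗ[R] V}
  {W : Submodule R V} {x₀ : V}

lemma exists_forall_pow_apply_sub_mem_iff_dvd (hW : W ∈ End.invtSubmodule (h : End R V)) (x : V) :
    ∃ n : ℕ, ∀ k : ℕ, (h ^ k) x - x ∈ W ↔ n ∣ k := by
  refine ⟨Function.minimalPeriod (W.mapQ W (h : End R V) hW) (W.mkQ x), fun k => ?_⟩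
  have hiter : (W.mapQ W (h : End R V) hW)^[k] (W.mkQ x) = W.mkQ ((h ^ k) x) := by
    rw [LinearEquiv.pow_apply]
    exact (Function.Semiconj.iterate_right (f := W.mkQ) (fun _ => rfl) k x).symm
  rw [← Function.isPeriodicPt_iff_minimalPeriod_dvd, Function.IsPeriodicPt, Function.IsFixedPt,
    hiter, ← sub_eq_zero, ← map_sub, Submodule.mkQ_apply, Submodule.Quotient.mk_eq_zero]

lemma cyclesOn_le_of_coset_return [Finite V] {n : ℕ} (hn : ∀ k : ℕ, (h ^ k) x₀ - x₀ ∈ W ↔ n ∣ k)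
    (hW : W ∈ End.invtSubmodule (h : End R V)) {γ : Equiv.Perm W}
    (hγ : ∀ w : W, x₀ + γ w = (h ^ n) (x₀ + w)) :
    cyclesOn γ Set.univ ≤ cyclesOn h.toEquiv Set.univ := by
  have hiter (m : ℕ) (w : W) : x₀ + ((γ ^ m) w : W) = (h ^ (n * m)) (x₀ + w) := by
    induction m with
    | zero => simp
    | succ m ih =>
      rw [pow_succ', Equiv.Perm.mul_apply, hγ, ih, mul_add_one, add_comm (n * m) n, pow_add,
        LinearEquiv.mul_apply]
  refine cyclesOn_le_cyclesOn (fun w => x₀ + (w : V)) fun w w' hww' => ?_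
  obtain ⟨k, hk⟩ := sameCycle_toEquiv_iff.mp hww'
  have hmem : (h ^ k) x₀ - x₀ ∈ W := by
    have : (h ^ k) x₀ - x₀ = w' - (h ^ k) w := by
      rw [sub_eq_sub_iff_add_eq_add, ← map_add, hk, add_comm]
    exact this ▸ sub_mem w'.2 (pow_apply_mem hW k w.2)
  obtain ⟨m, rfl⟩ := (hn k).mp hmem
  exact ⟨m, Subtype.ext (add_left_cancel ((hiter m w).trans hk))⟩

end CosetReturn

section FreeAction

variable {R V : Type*} [Ring R] [AddCommGroup V] [Module R V]

/-- The nonzero vectors as a set acted on by the cyclic group generated by `h`. -/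
def nonzeroVectors (h : V ≃ₗ[R] V) : SubMulAction (Subgroup.zpowers h) V where
  carrier := {x | x ≠ 0}
  smul_mem' f _ hx := (LinearEquiv.map_ne_zero_iff f.1).mpr hx

lemma exists_natCard_sub_one_eq_mul_orderOf [Finite V] {h : V ≃ₗ[R] V}
    (hfree : ∀ f ∈ Subgroup.zpowers h, ∀ x ≠ 0, f x = x → f = 1) :
    ∃ m, Nat.card V - 1 = m * orderOf h ∧ m + 1 ≤ cyclesOn h.toEquiv Set.univ := by
  let Ω := Quotient (MulAction.orbitRel (Subgroup.zpowers h) (nonzeroVectors h))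
  have hstab (x : nonzeroVectors h) : MulAction.stabilizer (Subgroup.zpowers h) x = ⊥ :=
    (Subgroup.eq_bot_iff_forall _).mpr fun f hf =>
      Subtype.ext (hfree f f.2 x x.2 (congrArg Subtype.val hf))
  have hcard : Nat.card (nonzeroVectors h) = Nat.card V - 1 :=
    (Nat.card_coe_set_eq ({0}ᶜ : Set V)).trans (by rw [Set.ncard_compl, Set.ncard_singleton])
  refine ⟨Nat.card Ω, ?_, ?_⟩
  · rw [← hcard, Nat.card_congr (MulAction.selfEquivOrbitsQuotientProd hstab), Nat.card_prod,
      Nat.card_zpowers]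
  · rw [← Finite.card_option]
    refine natCard_le_cyclesOn (fun o : Option Ω => o.elim 0 fun c => (c.out : V)) ?_
    have hzero (c : Ω) : ¬ SameCycle h.toEquiv 0 (c.out : V) := fun h0 =>
      c.out.2 (h0.eq_of_left (map_zero h)).symm
    rintro (_ | c) (_ | d) hcd
    · rfl
    · exact absurd hcd (hzero d)
    · exact absurd hcd.symm (hzero c)
    · obtain ⟨k, hk⟩ := sameCycle_toEquiv_iff.mp hcd
      rw [← c.out_eq, ← d.out_eq]
      refine congrArg some (Quotient.sound ?_)
      exact (MulAction.orbitRel _ _).symm ⟨⟨h ^ k, Subgroup.npow_mem_zpowers h k⟩, Subtype.ext hk⟩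

end FreeAction

section LinearClassification

variable {K V : Type*} [Field K] [AddCommGroup V] [Module K V] {h : V ≃ₗ[K] V}
  {W : Submodule K V} {x₀ : V}

/-- `h` acts irreducibly and its order is at least a third of the order `|V| - 1` of a Singer
cycle, which it divides. The zero space is allowed. -/
structure IsSingerType (h : V ≃ₗ[K] V) : Prop where
  eq_bot_or_eq_top : ∀ W ∈ End.invtSubmodule (h : End K V), W = ⊥ ∨ W = ⊤
  orderOf_dvd : orderOf h ∣ Nat.card K ^ finrank K V - 1
  le_three_mul_orderOf : Nat.card K ^ finrank K V - 1 ≤ 3 * orderOf h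

/-- `h = c • u` for a generator `c` of the multiplicative group of scalars and a unipotent `u ≠ 1`
of a plane, the latter encoded by `(h - c) ^ 2 = 0` and `h ≠ c`. -/
def IsScalarMulUnipotent (h : V ≃ₗ[K] V) : Prop :=
  finrank K V = 2 ∧ ∃ c : K, c ≠ 0 ∧ orderOf c = Nat.card K - 1 ∧
    ((h : End K V) - c • 1) ^ 2 = 0 ∧ (h : End K V) ≠ c • 1

lemma IsScalarMulUnipotent.exists_eq_smul_unipotent (hh : IsScalarMulUnipotent h) :
    finrank K V = 2 ∧ ∃ c : K, c ≠ 0 ∧ orderOf c = Nat.card K - 1 ∧ ∃ u : V ≃ₗ[K] V,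
      ((u : End K V) - 1) ^ finrank K V = 0 ∧ u ≠ 1 ∧ (h : End K V) = c • (u : End K V) := by
  obtain ⟨hdim, c, hc, hord, hsq, hne⟩ := hh
  let u : V ≃ₗ[K] V := h.trans (LinearEquiv.smulOfNeZero K V c⁻¹ (inv_ne_zero hc))
  have hu : (h : End K V) = c • (u : End K V) := by
    ext x
    exact (smul_inv_smul₀ hc (h x)).symm
  refine ⟨hdim, c, hc, hord, u, ?_, fun hu1 => hne (by rw [hu, hu1]; rfl), hu⟩
  rw [hu, ← smul_sub, smul_pow] at hsq
  rw [hdim]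
  exact (smul_eq_zero.mp hsq).resolve_left (pow_ne_zero 2 hc)

lemma IsSingerType.eq_bot_or_eq_of_le [FiniteDimensional K V]
    {hW : W ∈ End.invtSubmodule (h : End K V)} (hS : IsSingerType (restrictEquiv hW))
    {W' : Submodule K V} (hle : W' ≤ W) (hW' : W' ∈ End.invtSubmodule (h : End K V)) :
    W' = ⊥ ∨ W' = W := by
  rcases hS.eq_bot_or_eq_top (W'.comap W.subtype) fun _ hx => hW' hx with hbot | htop
  · exact .inl ((Submodule.disjoint_iff_comap_eq_bot.mpr hbot).eq_bot_of_ge hle)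
  · exact .inr (le_antisymm hle (Submodule.comap_subtype_eq_top.mp htop))

lemma exists_perm_of_coset_return [FiniteDimensional K V]
    (hW : W ∈ End.invtSubmodule (h : End K V)) {n : ℕ} (hn : (h ^ n) x₀ - x₀ ∈ W) :
    ∃ (γ : Equiv.Perm W) (b : W), (∀ w, γ w = (restrictEquiv hW ^ n) w + b) ∧
      ∀ w : W, x₀ + γ w = (h ^ n) (x₀ + w) := by
  refine ⟨(restrictEquiv hW ^ n).toEquiv.trans (Equiv.addRight ⟨_, hn⟩), ⟨_, hn⟩, fun w => rfl,
    fun w => ?_⟩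
  change x₀ + (((restrictEquiv hW ^ n) w : V) + ((h ^ n) x₀ - x₀)) = _
  rw [coe_restrictEquiv_pow_apply, map_add]
  abel

variable [Finite V]

lemma isSingerType_of_irreducible (hcyc : cyclesOn h.toEquiv Set.univ ≤ 4)
    (hirr : ∀ W ∈ End.invtSubmodule (h : End K V), W = ⊥ ∨ W = ⊤) : IsSingerType h := by
  obtain ⟨m, hcard, hm⟩ := exists_natCard_sub_one_eq_mul_orderOf (h := h) fun f hf x hx hfx =>
    have hcomm : Commute f h := by
      obtain ⟨k, rfl⟩ := Subgroup.mem_zpowers_iff.mp hf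
      exact (Commute.refl h).zpow_left k
    eq_one_of_apply_eq_self hirr hcomm hx hfx
  rw [Module.natCard_eq_pow_finrank (K := K)] at hcard
  exact ⟨hirr, hcard ▸ dvd_mul_left _ m, hcard ▸ Nat.mul_le_mul_right _ (by omega)⟩

variable [Finite K] {p : ℕ} [CharP K p]

/-- Otherwise `ker (h ^ n - 1)`, being comparable with the maximal `W`, is everything, and every
point of the coset `x₀ + W` is fixed by the least power `h ^ n` returning it to itself. -/
lemma ker_pow_sub_one_le_of_maximal (hp : 5 ≤ p) (hcyc : cyclesOn h.toEquiv Set.univ < 5)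
    (hW : W ∈ End.invtSubmodule (h : End K V)) (hbot : W ≠ ⊥)
    (hmax : ∀ W' ∈ End.invtSubmodule (h : End K V), W ≤ W' → W' = W ∨ W' = ⊤) {n : ℕ}
    (hn : ∀ k : ℕ, (h ^ k) x₀ - x₀ ∈ W ↔ n ∣ k) :
    LinearMap.ker (((h ^ n : V ≃ₗ[K] V) : End K V) - 1) ≤ W := by
  have hker := ker_mem_invtSubmodule (commute_pow_sub_one h n)
  rcases invtSubmodule_le_total (isUnit_two_of_three_le_char K p (by omega)) hcyc hker hW with
    hle | hle
  · exact hle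
  rcases hmax _ hker hle with heq | htop
  · exact heq.le
  obtain ⟨γ, b, -, hγ⟩ := exists_perm_of_coset_return hW ((hn n).mpr dvd_rfl)
  have hfixed (w : W) : γ w = w := Subtype.ext <| add_left_cancel <| (hγ w).trans <|
    sub_eq_zero.mp (LinearMap.congr_fun (LinearMap.ker_eq_top.mp htop) (x₀ + w))
  have hWcyc := natCard_le_cyclesOn (g := γ) id fun w w' hww' => hww'.eq_of_left (hfixed w)
  have hγcyc := cyclesOn_le_of_coset_return hn hW hγ
  have hWcard := natCard_le_natCard_of_ne_bot (K := K) hbot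
  have hKcard := char_le_natCard K p
  omega

variable [Fact p.Prime]

lemma finrank_eq_one_and_pow_eq_one (hp : 3 ≤ p) (hcyc : cyclesOn h.toEquiv Set.univ < 5)
    {n : ℕ} {b : V} {γ : Equiv.Perm V} (hγ : ∀ x, γ x = (h ^ n) x + b)
    (hγcyc : cyclesOn γ Set.univ < p) (hfix : ∀ x, γ x ≠ x) : finrank K V = 1 ∧ h ^ n = 1 := by
  obtain ⟨hcompl, hrank⟩ := isCompl_ker_range_of_fixedPointFree (K := K)
    (T := (h ^ n : V ≃ₗ[K] V)) p hp hγcyc hγ hfix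
  have hcomm := commute_pow_sub_one h n
  rcases invtSubmodule_le_total (isUnit_two_of_three_le_char K p hp) hcyc
    (ker_mem_invtSubmodule hcomm) (range_mem_invtSubmodule hcomm) with hle | hle
  · rw [hcompl.disjoint.eq_bot_of_le hle, finrank_bot] at hrank
    exact absurd hrank zero_ne_one
  · have htop := hcompl.codisjoint.symm.eq_top_of_ge hle
    rw [htop, finrank_top] at hrank
    refine ⟨hrank, LinearEquiv.ext fun x => sub_eq_zero.mp ?_⟩
    exact LinearMap.congr_fun (LinearMap.ker_eq_top.mp htop) x

/-- With `n` the least power of `h` returning a coset `x₀ + W ≠ W` to itself, `h ^ n` acts on this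
coset as an affine transformation of `W` with few cycles and without fixed points. -/
lemma exists_ker_pow_sub_one_eq (hp : 5 ≤ p) (hcyc : cyclesOn h.toEquiv Set.univ < 5)
    (hW : W ∈ End.invtSubmodule (h : End K V)) (hbot : W ≠ ⊥) (htop : W ≠ ⊤)
    (hmax : ∀ W' ∈ End.invtSubmodule (h : End K V), W ≤ W' → W' = W ∨ W' = ⊤) :
    finrank K W = 1 ∧ ∃ n, LinearMap.ker (((h ^ n : V ≃ₗ[K] V) : End K V) - 1) = W ∧
      LinearMap.range (((h ^ n : V ≃ₗ[K] V) : End K V) - 1) ≤ W := by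
  obtain ⟨x₀, -, hx₀⟩ := SetLike.exists_of_lt (lt_top_iff_ne_top.mpr htop)
  obtain ⟨n, hn⟩ := exists_forall_pow_apply_sub_mem_iff_dvd hW x₀
  set N : End K V := ((h ^ n : V ≃ₗ[K] V) : End K V) - 1
  have hNx₀ : N x₀ ∈ W := (hn n).mpr dvd_rfl
  have hker_le : LinearMap.ker N ≤ W := ker_pow_sub_one_le_of_maximal hp hcyc hW hbot hmax hn
  obtain ⟨γ, b, hγb, hγ⟩ := exists_perm_of_coset_return hW hNx₀
  have hγcyc := (cyclesOn_le_of_coset_return hn hW hγ).trans_lt hcyc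
  have hWcyc := (cyclesOn_restrictEquiv_le hW).trans_lt hcyc
  have hγfix (w : W) : γ w ≠ w := fun hw => by
    have hmem : x₀ + w ∈ LinearMap.ker N :=
      sub_eq_zero.mpr ((hγ w).symm.trans (congrArg (fun y : W => x₀ + (y : V)) hw))
    exact hx₀ ((W.add_mem_iff_left w.2).mp (hker_le hmem))
  obtain ⟨hrank, hpow⟩ := finrank_eq_one_and_pow_eq_one (p := p) (by omega) hWcyc
    hγb (hγcyc.trans_le hp) hγfix
  have hle_ker : W ≤ LinearMap.ker N := fun w hw => by
    have := congrArg Subtype.val (LinearEquiv.congr_fun hpow ⟨w, hw⟩)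
    rw [coe_restrictEquiv_pow_apply] at this
    exact sub_eq_zero.mpr this
  refine ⟨hrank, n, le_antisymm hker_le hle_ker, ?_⟩
  rintro _ ⟨z, rfl⟩
  refine apply_mem_of_maximal hW hmax (commute_pow_sub_one h n) (fun w hw => ?_) hx₀ hNx₀ z
  change N w ∈ W
  rw [LinearMap.mem_ker.mp (hle_ker hw)]
  exact W.zero_mem

lemma isScalarMulUnipotent_of_reducible (hp : 5 ≤ p) (hcyc : cyclesOn h.toEquiv Set.univ < 5)
    (hW : W ∈ End.invtSubmodule (h : End K V)) (hbot : W ≠ ⊥) (htop : W ≠ ⊤)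
    (hmax : ∀ W' ∈ End.invtSubmodule (h : End K V), W ≤ W' → W' = W ∨ W' = ⊤) :
    IsScalarMulUnipotent h := by
  obtain ⟨hrank, n, hker, hrange⟩ := exists_ker_pow_sub_one_eq hp hcyc hW hbot htop hmax
  have hdim : finrank K V = 2 := by
    have hsum := LinearMap.finrank_range_add_finrank_ker (((h ^ n : V ≃ₗ[K] V) : End K V) - 1)
    have hle := Submodule.finrank_mono hrange
    have hlt := Submodule.finrank_lt htop
    rw [hker] at hsum
    omega
  obtain ⟨w, hw, hw0⟩ := W.exists_mem_ne_zero_of_ne_bot hbot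
  obtain ⟨c, hc⟩ := exists_smul_eq_of_finrank_eq_one hrank (x := ⟨w, hw⟩)
    (by simpa using hw0) ⟨h w, hW hw⟩
  replace hc : h w = c • w := (congrArg Subtype.val hc).symm
  have hWc : W ≤ LinearMap.ker ((h : End K V) - c • 1) := by
    rw [eq_span_singleton_of_mem_of_finrank_eq_one hrank hw hw0]
    simp [Submodule.span_singleton_le_iff_mem, hc]
  have hsq := sub_smul_one_sq_eq_zero (hrange.trans hWc) (hker.le.trans hWc)
  have hne : (h : End K V) ≠ c • 1 := by
    intro hscalar
    have hpow (y : V) : (h ^ n) y = c ^ n • y :=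
      pow_apply_eq_pow_smul (LinearMap.congr_fun hscalar y) n
    have hfix : (h ^ n) w = w := sub_eq_zero.mp (hker.ge hw)
    have hcn : c ^ n = 1 := smul_left_injective K hw0 (by simp only [← hpow, hfix, one_smul])
    refine htop (hker ▸ Submodule.eq_top_iff'.mpr fun y => sub_eq_zero.mpr ?_)
    exact (hpow y).trans (by rw [hcn, one_smul, Module.End.one_apply])
  have hc0 := ne_zero_of_sub_smul_one_sq_eq_zero hsq hne
  have hcord := orderOf_eq_natCard_sub_one hc0 (exists_pow_eq_of_sq_eq_zero hcyc hsq hne)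
  exact ⟨hdim, c, hc0, hcord, hsq, hne⟩

lemma isSingerType_or_isScalarMulUnipotent (hp : 5 ≤ p)
    (hcyc : cyclesOn h.toEquiv Set.univ ≤ 4) : IsSingerType h ∨ IsScalarMulUnipotent h := by
  by_cases hirr : ∀ W ∈ End.invtSubmodule (h : End K V), W = ⊥ ∨ W = ⊤
  · exact .inl (isSingerType_of_irreducible hcyc hirr)
  push Not at hirr
  obtain ⟨W₀, hW₀, hbot, htop⟩ := hirr
  obtain ⟨W, hle, hW, hmax⟩ := (Set.toFinite {W | W ∈ End.invtSubmodule (h : End K V) ∧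
    W ≠ ⊤}).exists_le_maximal ⟨hW₀, htop⟩
  refine .inr (isScalarMulUnipotent_of_reducible hp (by omega) hW.1 (ne_bot_of_le_ne_bot hbot hle)
    hW.2 fun W' hW' hWW' => ?_)
  by_contra! hne
  exact hne.1 (le_antisymm (hmax ⟨hW', hne.2⟩ hWW') hWW')

end LinearClassification

section AffineNormalForm

variable {R V : Type*} [Ring R] [AddCommGroup V] [Module R V] {h : V ≃ₗ[R] V}
  {g : Equiv.Perm V} {b w₀ u : V}

lemma exists_apply_add_eq (hg : ∀ x, g x = h x + b)
    (hcod : Codisjoint (LinearMap.ker ((h : End R V) - 1)) (LinearMap.range ((h : End R V) - 1))) :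
    ∃ w₀ u, h u = u ∧ ∀ x, g (w₀ + x) = w₀ + (h x + u) := by
  obtain ⟨u, _, hu, ⟨y, rfl⟩, rfl⟩ := Submodule.codisjoint_iff_exists_add_eq.mp hcod b
  refine ⟨-y, u, sub_eq_zero.mp hu, fun x => ?_⟩
  rw [hg, map_add, map_neg, LinearMap.sub_apply, Module.End.one_apply, LinearEquiv.coe_coe]
  abel

lemma pow_apply_add_eq (hu : h u = u) (hg : ∀ x, g (w₀ + x) = w₀ + (h x + u)) (k : ℕ) (x : V) :
    (g ^ k) (w₀ + x) = w₀ + ((h ^ k) x + (k : R) • u) := by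
  induction k with
  | zero => simp
  | succ k ih =>
    rw [pow_succ', Equiv.Perm.mul_apply, ih, hg, map_add, map_smul, hu, pow_succ',
      LinearEquiv.mul_apply, Nat.cast_succ, add_smul, one_smul, add_assoc]

lemma cyclesOn_le_of_apply_eq_self [Finite V] (hg : ∀ x, g x = h x + b) (hw₀ : g w₀ = w₀) :
    cyclesOn h.toEquiv Set.univ ≤ cyclesOn g Set.univ := by
  have hnormal (x : V) : g (w₀ + x) = w₀ + (h x + 0) := by
    rw [hg, map_add, add_right_comm, ← hg, hw₀, add_zero]
  refine cyclesOn_le_cyclesOn (w₀ + ·) fun x y hxy => ?_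
  obtain ⟨k, hk⟩ := hxy.exists_nat_pow_eq
  rw [pow_apply_add_eq (map_zero h) hnormal, smul_zero, add_zero] at hk
  exact sameCycle_toEquiv_iff.mpr ⟨k, add_left_cancel hk⟩

end AffineNormalForm

section FixedPointFreeAffine

variable {K V : Type*} [Field K] [AddCommGroup V] [Module K V] {h : V ≃ₗ[K] V}
  {g : Equiv.Perm V} {b w₀ u : V}

lemma orderOf_eq_lcm (p : ℕ) [CharP K p] (hu : h u = u) (hu0 : u ≠ 0)
    (hg : ∀ x, g (w₀ + x) = w₀ + (h x + u)) : orderOf g = p.lcm (orderOf h) := by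
  refine Nat.dvd_right_iff_eq.mp fun k => ?_
  rw [Nat.lcm_dvd_iff, orderOf_dvd_iff_pow_eq_one, orderOf_dvd_iff_pow_eq_one,
    ← CharP.cast_eq_zero_iff K p]
  constructor
  · intro hgk
    have heq (x : V) : (h ^ k) x + (k : K) • u = x := by
      have := pow_apply_add_eq hu hg k x
      rw [hgk, Equiv.Perm.one_apply] at this
      exact (add_left_cancel this).symm
    have hk : (k : K) = 0 := by simpa [hu0] using heq 0
    exact ⟨hk, LinearEquiv.ext fun x => by simpa [hk] using heq x⟩
  · rintro ⟨hk, hhk⟩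
    ext y
    have := pow_apply_add_eq hu hg k (y - w₀)
    simpa [hk, hhk] using this

variable [Finite V] {W : Submodule K V}

lemma exists_pow_apply_eq_and_add_eq_of_sameCycle (hu : h u = u) (hu0 : u ≠ 0)
    (hg : ∀ x, g (w₀ + x) = w₀ + (h x + u)) (hW : W ∈ End.invtSubmodule (h : End K V))
    (hdisj : Disjoint (LinearMap.ker ((h : End K V) - 1)) W) {w w' : W} {a a' : K}
    (hcyc : g.SameCycle (w₀ + (w + a • u)) (w₀ + (w' + a' • u))) :
    ∃ k : ℕ, (h ^ k) w = (w' : V) ∧ a + k = a' := by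
  obtain ⟨k, hk⟩ := hcyc.exists_nat_pow_eq
  have hfix : (h ^ k) u = u := by
    simpa using pow_apply_eq_pow_smul (c := (1 : K)) (by simpa using hu) k
  rw [pow_apply_add_eq hu hg, map_add, map_smul, hfix, add_right_inj] at hk
  have hcross : (a' - a - k) • u = (h ^ k) w - w' := by
    rw [sub_smul, sub_smul, eq_sub_of_add_eq' hk.symm]
    abel
  have hzero : (a' - a - k) • u = 0 := Submodule.disjoint_def.mp hdisj _
    (Submodule.smul_mem _ _ (sub_eq_zero.mpr hu)) (hcross ▸ sub_mem (pow_apply_mem hW k w.2) w'.2)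
  refine ⟨k, sub_eq_zero.mp (hcross ▸ hzero), ?_⟩
  linear_combination -((smul_eq_zero.mp hzero).resolve_right hu0)

lemma cyclesOn_restrictEquiv_le_of_disjoint (hu : h u = u) (hu0 : u ≠ 0)
    (hg : ∀ x, g (w₀ + x) = w₀ + (h x + u)) (hW : W ∈ End.invtSubmodule (h : End K V))
    (hdisj : Disjoint (LinearMap.ker ((h : End K V) - 1)) W) :
    cyclesOn (restrictEquiv hW).toEquiv Set.univ ≤ cyclesOn g Set.univ := by
  refine cyclesOn_le_cyclesOn (fun w : W => w₀ + (w + (0 : K) • u)) fun w w' hww' => ?_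
  obtain ⟨k, hk, -⟩ := exists_pow_apply_eq_and_add_eq_of_sameCycle hu hu0 hg hW hdisj hww'
  exact sameCycle_toEquiv_iff.mpr ⟨k, Subtype.ext (by simpa using hk)⟩

lemma not_isScalarMulUnipotent_restrictEquiv (hu : h u = u) (hu0 : u ≠ 0)
    (hg : ∀ x, g (w₀ + x) = w₀ + (h x + u)) (hW : W ∈ End.invtSubmodule (h : End K V))
    (hdisj : Disjoint (LinearMap.ker ((h : End K V) - 1)) W)
    (hcyc : cyclesOn g Set.univ < Nat.card K) : ¬ IsScalarMulUnipotent (restrictEquiv hW) := by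
  rintro ⟨-, c, -, -, hsq, hne⟩
  obtain ⟨x, hx⟩ := exists_sub_smul_one_apply_ne_zero hne
  refine hcyc.not_ge (natCard_le_cyclesOn (fun a : K => w₀ + (x + a • u)) fun a a' haa' => ?_)
  obtain ⟨k, hk, hadd⟩ := exists_pow_apply_eq_and_add_eq_of_sameCycle hu hu0 hg hW hdisj haa'
  rw [← hadd, natCast_eq_zero_of_pow_apply_eq_self hsq hx (Subtype.ext (by simpa using hk)),
    add_zero]

lemma exists_isCompl_isSingerType_of_fixedPointFree [Finite K] {p : ℕ} [Fact p.Prime] [CharP K p]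
    (hp : 5 ≤ p) (hcyc : cyclesOn g Set.univ ≤ 4) (hg : ∀ x, g x = h x + b) (hfix : ∀ x, g x ≠ x) :
    ∃ (U W : Submodule K V) (hW : W ∈ End.invtSubmodule (h : End K V)), IsCompl U W ∧
      finrank K U = 1 ∧ (∀ x ∈ U, h x = x) ∧ IsSingerType (restrictEquiv hW) ∧
      orderOf (restrictEquiv hW) = orderOf h ∧ orderOf g = p.lcm (orderOf h) := by
  obtain ⟨hcompl, hrank⟩ := isCompl_ker_range_of_fixedPointFree (K := K) (T := h) p (by omega)
    (by omega) hg hfix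
  have hW := range_mem_invtSubmodule (h := h) ((Commute.refl (h : End K V)).sub_left (.one_left _))
  obtain ⟨w₀, u, hu, hgu⟩ := exists_apply_add_eq hg hcompl.codisjoint
  have hu0 : u ≠ 0 := by
    rintro rfl
    exact hfix w₀ (by simpa using hgu 0)
  have hcard := char_le_natCard K p
  have hScyc := cyclesOn_restrictEquiv_le_of_disjoint hu hu0 hgu hW hcompl.disjoint
  have hS := (isSingerType_or_isScalarMulUnipotent hp (hScyc.trans hcyc)).resolve_right
    (not_isScalarMulUnipotent_restrictEquiv hu hu0 hgu hW hcompl.disjoint (by omega))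
  exact ⟨_, _, hW, hcompl, hrank, fun x hx => sub_eq_zero.mp hx, hS,
    orderOf_restrictEquiv_of_codisjoint hW hcompl.codisjoint, orderOf_eq_lcm p hu hu0 hgu⟩

end FixedPointFreeAffine

theorem affine_four_cycles_classification_general {K V : Type*} [Field K] [Finite K] (p : ℕ)
    [Fact p.Prime] [CharP K p] (hp : 5 ≤ p) [AddCommGroup V] [Module K V] [FiniteDimensional K V]
    (h : V ≃ₗ[K] V) (v : V) (g : Equiv.Perm V) (hg : ∀ x, g x = h (x + v))
    (hcyc : cyclesOn g Set.univ ≤ 4) :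
    (LinearMap.ker ((h : End K V) - 1) = ⊥ ∧
      (∀ W : Submodule K V, (∀ x ∈ W, h x ∈ W) → W = ⊥ ∨ W = ⊤) ∧
      orderOf h ∣ Nat.card K ^ finrank K V - 1 ∧
      Nat.card K ^ finrank K V - 1 ≤ 3 * orderOf h) ∨
    (finrank K V = 2 ∧ ∃ c : K, c ≠ 0 ∧ orderOf c = Nat.card K - 1 ∧ ∃ u : V ≃ₗ[K] V,
      ((u : End K V) - 1) ^ finrank K V = 0 ∧ u ≠ 1 ∧ (h : End K V) = c • (u : End K V)) ∨
    (finrank K V = 1 ∧ h = 1 ∧ v ≠ 0) ∨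
    (2 ≤ finrank K V ∧ ∃ U W : Submodule K V,
      (∀ x ∈ U, h x ∈ U) ∧ (∀ x ∈ W, h x ∈ W) ∧ IsCompl U W ∧
      finrank K U = 1 ∧ (∀ x ∈ U, h x = x) ∧
      (W ≠ ⊥ ∧ ∀ W' : Submodule K V, W' ≤ W → (∀ x ∈ W', h x ∈ W') → W' = ⊥ ∨ W' = W) ∧
      orderOf h ∣ Nat.card K ^ (finrank K V - 1) - 1 ∧
      Nat.card K ^ (finrank K V - 1) - 1 ≤ 3 * orderOf h ∧ orderOf g = p * orderOf h) := by
  have : Finite V := Module.finite_of_finite K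
  have hg' (x : V) : g x = h x + h v := by rw [hg, map_add]
  by_cases hfix : ∃ w, g w = w
  · obtain ⟨w, hw⟩ := hfix
    have hhcyc := (cyclesOn_le_of_apply_eq_self hg' hw).trans hcyc
    rcases isSingerType_or_isScalarMulUnipotent hp hhcyc with hh | hh
    · have hker := ker_sub_one_eq_bot (by linarith [char_le_natCard K p] : _ < Nat.card K)
      exact .inl ⟨hker, hh.eq_bot_or_eq_top, hh.orderOf_dvd, hh.le_three_mul_orderOf⟩
    · exact .inr (.inl hh.exists_eq_smul_unipotent)
  push Not at hfix
  obtain ⟨U, W, hW, hcompl, hU, hfixU, hS, hordS, hordg⟩ :=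
    exists_isCompl_isSingerType_of_fixedPointFree hp hcyc hg' hfix
  have hrank : finrank K W = finrank K V - 1 := by
    rw [← Submodule.finrank_add_eq_of_isCompl hcompl, hU, Nat.add_sub_cancel_left]
  have ⟨_, hdvd, hle⟩ := hS
  rw [hordS, hrank] at hdvd hle
  by_cases hbot : W = ⊥
  · have htop : U = ⊤ := eq_top_of_isCompl_bot (hbot ▸ hcompl)
    rw [htop, finrank_top] at hU
    refine .inr (.inr (.inl ⟨hU, LinearEquiv.ext fun x => hfixU x (htop ▸ trivial), ?_⟩))
    rintro rfl
    exact hfix 0 (by rw [hg, add_zero, map_zero])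
  · have hpos : 1 ≤ finrank K W := Submodule.one_le_finrank_iff.mpr hbot
    rw [(coprime_of_dvd_natCard_pow_sub_one (by omega) hdvd).lcm_eq_mul] at hordg
    exact .inr (.inr (.inr ⟨by omega, U, W, fun x hx => (hfixU x hx).symm ▸ hx, hW, hcompl, hU,
      hfixU, ⟨hbot, fun _ => hS.eq_bot_or_eq_of_le⟩, hdvd, hle, hordg⟩))

/-- Classification of affine transformations `g = t_v h` with at most four
cycles over `𝔽_p`, `p ≥ 5`: either (1) `h` is fixed-point-free and a (power of a) Singer
cycle; or (2) `d = 2` and `h = c • u` with `c` a scalar of order `p - 1` and `u ≠ 1`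
unipotent; or (3) `d = 1`, `h = 1`, `g` a nontrivial translation; or (4) `h = J₁ ⊕ s`
with `s` Singer-type on a hyperplane and `orderOf g = p * orderOf h`. -/
theorem affine_four_cycles_classification (p d : ℕ) [Fact p.Prime] (hp5 : 5 ≤ p)
    (hd1 : 1 ≤ d)
    (V : Type*) [AddCommGroup V] [Module (ZMod p) V] [Module.Finite (ZMod p) V]
    (hdim : Module.finrank (ZMod p) V = d)
    (h : V ≃ₗ[ZMod p] V) (v : V)
    (g : Equiv.Perm V) (hg : ∀ x : V, g x = h (x + v))
    (hfour : cyclesOn g (Set.univ : Set V) ≤ 4) :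
    -- (1) Singer cycle case
    (LinearMap.ker ((h.toLinearMap : Module.End (ZMod p) V) - 1) = ⊥ ∧
      (∀ W : Submodule (ZMod p) V, (∀ x ∈ W, h x ∈ W) → W = ⊥ ∨ W = ⊤) ∧
      orderOf h ∣ p ^ d - 1 ∧ p ^ d - 1 ≤ 3 * orderOf h) ∨
    -- (2) `s₁ ⊗ J₂` case
    (d = 2 ∧ ∃ (c : ZMod p), c ≠ 0 ∧ orderOf c = p - 1 ∧ ∃ u : V ≃ₗ[ZMod p] V,
      ((u.toLinearMap : Module.End (ZMod p) V) - 1) ^ d = 0 ∧ u ≠ 1 ∧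
      (h.toLinearMap : Module.End (ZMod p) V) = c • (u.toLinearMap : Module.End (ZMod p) V)) ∨
    -- (3) translation case
    (d = 1 ∧ h = 1 ∧ v ≠ 0) ∨
    -- (4) `J₁ ⊕ s_{d-1}^i` case
    (2 ≤ d ∧ ∃ U W : Submodule (ZMod p) V,
      (∀ x ∈ U, h x ∈ U) ∧ (∀ x ∈ W, h x ∈ W) ∧ IsCompl U W ∧
      Module.finrank (ZMod p) U = 1 ∧ (∀ x ∈ U, h x = x) ∧
      (W ≠ ⊥ ∧ ∀ W' : Submodule (ZMod p) V, W' ≤ W → (∀ x ∈ W', h x ∈ W') →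
        W' = ⊥ ∨ W' = W) ∧
      orderOf h ∣ p ^ (d - 1) - 1 ∧ p ^ (d - 1) - 1 ≤ 3 * orderOf h ∧
      orderOf g = p * orderOf h) := by
  subst hdim
  simpa only [Nat.card_zmod] using affine_four_cycles_classification_general p hp5 h v g hg hfour
end

section
/- Let p be a prime and let d₁, d₂ be integers with 2 ≤ d₁ < d₂. Let h₁ ∈ GL_{d₁}(𝔽_p) and h₂ ∈ GL_{d₂}(𝔽_p), and let h₁ ⊗ h₂ ∈ GL_{d₁d₂}(𝔽_p) denote their Kronecker (tensor) product. If 4 · orderOf(h₁ ⊗ h₂) ≥ p^{d₁d₂ − 1}, then (d₁, d₂) = (2, 3) and p ∈ {2, 3}. Moreover, there exist h₁ ∈ GL₂(𝔽₂) and h₂ ∈ GL₃(𝔽₂) with 4 · orderOf(h₁ ⊗ h₂) ≥ 2⁶, while for all h₁ ∈ GL₂(𝔽₃) and h₂ ∈ GL₃(𝔽₃) one has 4 · orderOf(h₁ ⊗ h₂) < 3⁶. -/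
open Matrix

/-!
For a subalgebra `B₁` of `M_{d₁}(K)` and `B₂` of `M_{d₂}(K)`, the homomorphism
`B₁ˣ × B₂ˣ → GL_{d₁d₂}(K)` given by the Kronecker product kills the pairs `(c, c⁻¹)` of scalars.
With `Bᵢ = K[hᵢ]`, which has at most `q ^ dᵢ` elements by Cayley–Hamilton, the order of `h₁ ⊗ h₂`
is at most `(q ^ d₁ - 1) * (q ^ d₂ - 1) / (q - 1)`. Comparison with `q ^ (d₁ * d₂ - 1) / 4` leaves
`(d₁, d₂) = (2, 3)` with `q ≤ 4`, and `(d₁, d₂, q) = (2, 4, 2)`. In the latter case element orders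
in `GL₂(𝔽₂)` are at most 3 and those in `GL₄(𝔽₂)` are at most 10, or 12, or 15, so that their least
common multiples do not exceed `30 < 2 ^ 7 / 4`. For `(2, 3)` and `q = 2`, elements of orders 3
and 7 have a Kronecker product of order 21.
-/

open scoped Kronecker

theorem orderOf_map_mul_card_ker_dvd {G M : Type*} [Group G] [Monoid M] (f : G →* M) (g : G) :
    orderOf (f g) * Nat.card f.ker ∣ Nat.card G := by
  have hpow : f g ^ f.ker.index = 1 := by
    rw [← map_pow]
    exact f.ker.pow_index_mem g
  rw [← f.ker.index_mul_card]
  exact mul_dvd_mul_right (orderOf_dvd_of_pow_eq_one hpow) _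

theorem card_units_add_ncard_nonunits (M : Type*) [Monoid M] [Finite M] :
    Nat.card Mˣ + (nonunits M).ncard = Nat.card M := by
  have hrange : Set.range (Units.val : Mˣ → M) = (nonunits M)ᶜ := by
    ext x
    simp [nonunits, IsUnit]
  rw [← Set.ncard_add_ncard_compl (nonunits M), ← hrange, add_comm,
    ← Nat.card_coe_set_eq (Set.range _),
    Nat.card_range_of_injective Units.val_injective]

-- Left multiplication by a nonzero nonunit has both its kernel and its image in the nonunits.
theorem card_le_sq_ncard_nonunits {R : Type*} [Ring R] [Finite R] {z : R} (hz : z ∈ nonunits R)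
    (hz₀ : z ≠ 0) : Nat.card R ≤ (nonunits R).ncard ^ 2 := by
  let f : R →+ R := AddMonoidHom.mulLeft z
  have hker : (f.ker : Set R) ⊆ nonunits R := fun b (hb : z * b = 0) hunit =>
    hz₀ (hunit.mul_left_eq_zero.mp hb)
  have hrange : (f.range : Set R) ⊆ nonunits R := by
    rintro _ ⟨b, rfl⟩ hunit
    exact hz (isUnit_of_mul_isUnit_left hunit)
  calc Nat.card R = Nat.card f.ker * Nat.card f.range := by
        rw [← AddSubgroup.index_ker, AddSubgroup.card_mul_index]
    _ ≤ (nonunits R).ncard * (nonunits R).ncard :=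
        Nat.mul_le_mul (Set.ncard_le_ncard hker) (Set.ncard_le_ncard hrange)
    _ = _ := (sq _).symm

section AdjoinSingleton

variable {R A : Type*} [CommRing R] [Ring A] [Algebra R A]

open Polynomial in
theorem finrank_adjoin_singleton_le_natDegree [Nontrivial R] {x : A} {f : R[X]} (hf : f.Monic)
    (hfx : aeval x f = 0) :
    Module.finrank R (Algebra.adjoin R {x}) ≤ f.natDegree := by
  classical
  rw [← Subalgebra.finrank_toSubmodule, ← Submodule.span_range_natDegree_eq_adjoin hf hfx]
  exact (finrank_span_finset_le_card _).trans (Finset.card_image_le.trans_eq (Finset.card_range _))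

theorem exists_unit_adjoin_singleton [Finite A] (g : Aˣ) :
    ∃ u : (Algebra.adjoin R {(g : A)})ˣ, ((u : Algebra.adjoin R {(g : A)}) : A) = g := by
  refine ⟨Units.ofPowEqOne ⟨g, Algebra.self_mem_adjoin_singleton R _⟩ (orderOf g)
    (Subtype.ext ?_) (orderOf_pos g).ne', rfl⟩
  exact (Units.val_pow_eq_pow_val g _).symm.trans (congrArg Units.val (pow_orderOf_eq_one g))

theorem orderOf_dvd_card_units_adjoin_singleton [Finite A] (g : Aˣ) :
    orderOf g ∣ Nat.card (Algebra.adjoin R {(g : A)})ˣ := by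
  obtain ⟨u, hu⟩ := exists_unit_adjoin_singleton (R := R) g
  have hval := orderOf_map_dvd ((Algebra.adjoin R {(g : A)}).val : _ →* A)
    (u : Algebra.adjoin R {(g : A)})
  rw [MonoidHom.coe_coe, Subalgebra.coe_val, hu, orderOf_units, orderOf_units] at hval
  exact hval.trans (orderOf_dvd_natCard u)

end AdjoinSingleton

section MatrixOrder

variable {K n : Type*} [Field K] [Finite K] [Fintype n] [DecidableEq n]

theorem card_adjoin_singleton_le (M : Matrix n n K) :
    Nat.card (Algebra.adjoin K {M}) ≤ Nat.card K ^ Fintype.card n := by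
  rw [Module.natCard_eq_pow_finrank (K := K), ← M.charpoly_natDegree_eq_dim]
  exact Nat.pow_le_pow_right Nat.card_pos
    (finrank_adjoin_singleton_le_natDegree M.charpoly_monic M.aeval_self_charpoly)

theorem card_units_adjoin_singleton_le [Nonempty n] (M : Matrix n n K) :
    Nat.card (Algebra.adjoin K {M})ˣ ≤ Nat.card K ^ Fintype.card n - 1 :=
  Nat.le_sub_one_of_lt ((natCard_units_lt _).trans_le (card_adjoin_singleton_le M))

theorem orderOf_lt_card_pow_card [Nonempty n] (g : GL n K) :
    orderOf g < Nat.card K ^ Fintype.card n :=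
  ((Nat.le_of_dvd Nat.card_pos (orderOf_dvd_card_units_adjoin_singleton (R := K) g)).trans_lt
    (natCard_units_lt _)).trans_le (card_adjoin_singleton_le _)

end MatrixOrder

section Kronecker

theorem kronecker_one_injective {R m n : Type*} [MulZeroOneClass R] [DecidableEq n] [Nonempty n] :
    Function.Injective fun A : Matrix m m R => A ⊗ₖ (1 : Matrix n n R) := by
  intro A A' h
  obtain ⟨k⟩ := ‹Nonempty n›
  ext i j
  simpa using congrFun (congrFun h (i, k)) (j, k)

theorem one_kronecker_injective {R m n : Type*} [MulZeroOneClass R] [DecidableEq m] [Nonempty m] :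
    Function.Injective fun B : Matrix n n R => (1 : Matrix m m R) ⊗ₖ B := by
  intro B B' h
  obtain ⟨k⟩ := ‹Nonempty m›
  ext i j
  simpa using congrFun (congrFun h (k, i)) (k, j)

variable {R m n : Type*} [CommSemiring R] [Fintype m] [DecidableEq m] [Fintype n] [DecidableEq n]

variable (R m n) in
/-- The Kronecker product as a monoid homomorphism out of the product of two matrix monoids. -/
def kroneckerMonoidHom : Matrix m m R × Matrix n n R →* Matrix (m × n) (m × n) R where
  toFun x := x.1 ⊗ₖ x.2
  map_one' := one_kronecker_one
  map_mul' x y := mul_kronecker_mul x.1 y.1 x.2 y.2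

theorem orderOf_kronecker_dvd_lcm (A : Matrix m m R) (B : Matrix n n R) :
    orderOf (A ⊗ₖ B) ∣ (orderOf A).lcm (orderOf B) := by
  rw [← Prod.orderOf_mk]
  exact orderOf_map_dvd (kroneckerMonoidHom R m n) (A, B)

theorem orderOf_kronecker_of_coprime [Nonempty m] [Nonempty n] {A : Matrix m m R}
    {B : Matrix n n R} (h : (orderOf A).Coprime (orderOf B)) :
    orderOf (A ⊗ₖ B) = orderOf A * orderOf B := by
  have hA : orderOf (A ⊗ₖ (1 : Matrix n n R)) = orderOf A :=
    orderOf_injective ((kroneckerMonoidHom R m n).comp (.inl _ _)) kronecker_one_injective A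
  have hB : orderOf ((1 : Matrix m m R) ⊗ₖ B) = orderOf B :=
    orderOf_injective ((kroneckerMonoidHom R m n).comp (.inr _ _)) one_kronecker_injective B
  have hcomm : Commute (A ⊗ₖ (1 : Matrix n n R)) ((1 : Matrix m m R) ⊗ₖ B) := by
    simp only [Commute, SemiconjBy, ← mul_kronecker_mul, one_mul, mul_one]
  have hmul : A ⊗ₖ B = (A ⊗ₖ (1 : Matrix n n R)) * ((1 : Matrix m m R) ⊗ₖ B) := by
    rw [← mul_kronecker_mul, mul_one, one_mul]
  rw [hmul, hcomm.orderOf_mul_eq_mul_orderOf_of_coprime (by rwa [hA, hB]), hA, hB]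

end Kronecker

section KroneckerBound

variable {K m n : Type*} [Field K] [Fintype m] [DecidableEq m] [Fintype n] [DecidableEq n]

theorem orderOf_kronecker_mul_card_units_dvd [Nonempty m] (B₁ : Subalgebra K (Matrix m m K))
    (B₂ : Subalgebra K (Matrix n n K)) (u : B₁ˣ) (v : B₂ˣ) :
    orderOf ((u : Matrix m m K) ⊗ₖ (v : Matrix n n K)) * Nat.card Kˣ ∣
      Nat.card B₁ˣ * Nat.card B₂ˣ := by
  let f : B₁ˣ × B₂ˣ →* Matrix (m × n) (m × n) K :=
    (kroneckerMonoidHom K m n).comp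
      (((B₁.val : B₁ →* Matrix m m K).comp (Units.coeHom B₁)).prodMap
        ((B₂.val : B₂ →* Matrix n n K).comp (Units.coeHom B₂)))
  let s : Kˣ →* B₁ˣ × B₂ˣ :=
    (Units.map (algebraMap K B₁ : K →* B₁)).prod
      ((Units.map (algebraMap K B₂ : K →* B₂)).comp (invMonoidHom : Kˣ →* Kˣ))
  have hs : Function.Injective s := fun c c' h =>
    Units.map_injective (algebraMap K B₁).injective (congrArg Prod.fst h)
  have hfs (c : Kˣ) : s c ∈ f.ker := by
    change algebraMap K (Matrix m m K) c ⊗ₖ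
      algebraMap K (Matrix n n K) ((c⁻¹ : Kˣ) : K) = 1
    rw [Algebra.algebraMap_eq_smul_one, Algebra.algebraMap_eq_smul_one, smul_kronecker,
      kronecker_smul, one_kronecker_one, smul_smul, Units.mul_inv, one_smul]
  have hker : Nat.card Kˣ ∣ Nat.card f.ker :=
    Subgroup.card_dvd_of_injective (s.codRestrict f.ker hfs)
      ((Set.injective_codRestrict hfs).mpr hs)
  rw [← Nat.card_prod]
  exact (mul_dvd_mul_left _ hker).trans (orderOf_map_mul_card_ker_dvd f (u, v))

theorem orderOf_kronecker_mul_le [Finite K] [Nonempty m] [Nonempty n] (h₁ : GL m K) (h₂ : GL n K) :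
    orderOf ((h₁ : Matrix m m K) ⊗ₖ (h₂ : Matrix n n K)) * (Nat.card K - 1) ≤
      (Nat.card K ^ Fintype.card m - 1) * (Nat.card K ^ Fintype.card n - 1) := by
  obtain ⟨u, hu⟩ := exists_unit_adjoin_singleton (R := K) h₁
  obtain ⟨v, hv⟩ := exists_unit_adjoin_singleton (R := K) h₂
  have hdvd := orderOf_kronecker_mul_card_units_dvd _ _ u v
  rw [hu, hv, Nat.card_units] at hdvd
  exact (Nat.le_of_dvd (Nat.mul_pos Nat.card_pos Nat.card_pos) hdvd).trans
    (Nat.mul_le_mul (card_units_adjoin_singleton_le _) (card_units_adjoin_singleton_le _))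

end KroneckerBound

section Numerical

variable {q a b : ℕ}

theorem mul_le_add_add_two_of_pow_mul_le (hq : 2 ≤ q)
    (h : q ^ (a * b - 1) * (q - 1) ≤ 4 * ((q ^ a - 1) * (q ^ b - 1))) :
    a * b ≤ a + b + 2 := by
  by_contra! hab
  have hqa : 0 < q ^ a := by positivity
  have hqb : 0 < q ^ b := by positivity
  exact lt_irrefl _ <| calc
    q ^ (a * b - 1) * (q - 1) ≤ 4 * ((q ^ a - 1) * (q ^ b - 1)) := h
    _ < 4 * (q ^ a * q ^ b) := by
      gcongr 4 * ?_
      exact Nat.mul_lt_mul_of_lt_of_le (by lia) (by lia) (by lia)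
    _ ≤ q ^ 2 * (q ^ a * q ^ b) := by gcongr; nlinarith
    _ = q ^ (a + b + 2) := by ring
    _ ≤ q ^ (a * b - 1) := Nat.pow_le_pow_right (by lia) (by lia)
    _ ≤ q ^ (a * b - 1) * (q - 1) := Nat.le_mul_of_pos_right _ (by lia)

theorem pow_lt_of_pow_mul_le (hq : 2 ≤ q)
    (h : q ^ (2 * (b + 1) - 1) * (q - 1) ≤ 4 * ((q ^ 2 - 1) * (q ^ (b + 1) - 1))) :
    q ^ b < 4 * (q + 1) := by
  have hqb : 0 < q ^ (b + 1) := by positivity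
  have hfactor : q ^ 2 - 1 = (q + 1) * (q - 1) := by simpa using Nat.sq_sub_sq q 1
  refine lt_of_mul_lt_mul_right (a := q ^ (b + 1) * (q - 1)) ?_ (Nat.zero_le _)
  calc q ^ b * (q ^ (b + 1) * (q - 1)) = q ^ (2 * (b + 1) - 1) * (q - 1) := by
        rw [show 2 * (b + 1) - 1 = b + (b + 1) by lia, pow_add q b (b + 1), mul_assoc]
    _ ≤ 4 * ((q ^ 2 - 1) * (q ^ (b + 1) - 1)) := h
    _ < 4 * ((q ^ 2 - 1) * q ^ (b + 1)) := by
        have : 0 < q ^ 2 - 1 := by rw [hfactor]; exact Nat.mul_pos (by lia) (by lia)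
        gcongr
        lia
    _ = 4 * (q + 1) * (q ^ (b + 1) * (q - 1)) := by rw [hfactor]; ring

theorem eq_two_and_eq_three_or_eq_four_of_pow_mul_le (hq : 2 ≤ q) (ha : 2 ≤ a) (hab : a < b)
    (h : q ^ (a * b - 1) * (q - 1) ≤ 4 * ((q ^ a - 1) * (q ^ b - 1))) :
    a = 2 ∧ (b = 3 ∧ q ≤ 4 ∨ b = 4 ∧ q = 2) := by
  have hmul := mul_le_add_add_two_of_pow_mul_le hq h
  obtain rfl : a = 2 := by nlinarith
  refine ⟨rfl, ?_⟩
  obtain rfl | rfl : b = 3 ∨ b = 4 := by lia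
  · have := pow_lt_of_pow_mul_le (b := 2) hq h
    exact .inl ⟨rfl, by nlinarith⟩
  · have := pow_lt_of_pow_mul_le (b := 3) hq h
    exact .inr ⟨rfl, by nlinarith [sq_nonneg q]⟩

end Numerical

section CardTwo

variable {K : Type*} [Field K] [Finite K]

-- An element of order 14 would leave the ring `K[g]` of order 16 with only two nonunits, and
-- `16 > 2 ^ 2`.
theorem orderOf_ne_fourteen_of_card_eq_two (hK : Nat.card K = 2) (g : GL (Fin 4) K) :
    orderOf g ≠ 14 := by
  intro hg
  let B := Algebra.adjoin K {(g : Matrix (Fin 4) (Fin 4) K)}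
  have hdvd : 14 ∣ Nat.card Bˣ := hg ▸ orderOf_dvd_card_units_adjoin_singleton (R := K) g
  have hlt : Nat.card Bˣ < Nat.card B := natCard_units_lt B
  have hle : Nat.card B ≤ 2 ^ 4 := by
    simpa [hK] using card_adjoin_singleton_le (g : Matrix (Fin 4) (Fin 4) K)
  have hpow : Nat.card B = 2 ^ Module.finrank K B := hK ▸ Module.natCard_eq_pow_finrank
  have hpos : 0 < Nat.card Bˣ := Nat.card_pos
  have hcard : Nat.card B = 16 := by
    have : Module.finrank K B ≤ 4 := (Nat.pow_le_pow_iff_right (by lia)).mp (hpow ▸ hle)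
    interval_cases Module.finrank K B <;> lia
  have hadd := card_units_add_ncard_nonunits B
  have hncard : (nonunits B).ncard = 2 := by lia
  obtain ⟨z, hz, hz₀⟩ := Set.exists_ne_of_one_lt_ncard (by lia : 1 < (nonunits B).ncard) 0
  have := card_le_sq_ncard_nonunits hz hz₀
  rw [hncard] at this
  lia

theorem orderOf_le_ten_or_eq_of_card_eq_two (hK : Nat.card K = 2) (g : GL (Fin 4) K) :
    orderOf g ≤ 10 ∨ orderOf g = 12 ∨ orderOf g = 15 := by
  have hdvd : orderOf g ∣ 20160 := by
    have := Fintype.ofFinite K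
    have hcard : Nat.card (GL (Fin 4) K) = 20160 := by
      simp [card_GL_field, Fin.prod_univ_four, ← Nat.card_eq_fintype_card, hK]
    exact hcard ▸ orderOf_dvd_natCard g
  have hlt : orderOf g < 16 := by simpa [hK] using orderOf_lt_card_pow_card g
  have hne := orderOf_ne_fourteen_of_card_eq_two hK g
  interval_cases orderOf g <;> lia

theorem orderOf_kronecker_le_thirty_of_card_eq_two (hK : Nat.card K = 2) (h₁ : GL (Fin 2) K)
    (h₂ : GL (Fin 4) K) :
    orderOf ((h₁ : Matrix (Fin 2) (Fin 2) K) ⊗ₖ (h₂ : Matrix (Fin 4) (Fin 4) K)) ≤ 30 := by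
  have hdvd := orderOf_kronecker_dvd_lcm (h₁ : Matrix (Fin 2) (Fin 2) K)
    (h₂ : Matrix (Fin 4) (Fin 4) K)
  rw [orderOf_units, orderOf_units] at hdvd
  have hpos₁ : 0 < orderOf h₁ := orderOf_pos h₁
  have hpos₂ : 0 < orderOf h₂ := orderOf_pos h₂
  refine (Nat.le_of_dvd (Nat.lcm_pos hpos₁ hpos₂) hdvd).trans ?_
  have hlt : orderOf h₁ < 4 := by simpa [hK] using orderOf_lt_card_pow_card h₁
  obtain h | h | h := orderOf_le_ten_or_eq_of_card_eq_two hK h₂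
  · calc (orderOf h₁).lcm (orderOf h₂) ≤ orderOf h₁ * orderOf h₂ :=
          Nat.le_of_dvd (Nat.mul_pos hpos₁ hpos₂) (Nat.lcm_dvd_mul _ _)
      _ ≤ 3 * 10 := Nat.mul_le_mul (by lia) h
  all_goals
    rw [h]
    interval_cases orderOf h₁ <;> decide

end CardTwo

theorem exists_orderOf_kronecker_eq_twentyOne :
    ∃ (h₁ : GL (Fin 2) (ZMod 2)) (h₂ : GL (Fin 3) (ZMod 2)),
      orderOf ((h₁ : Matrix (Fin 2) (Fin 2) (ZMod 2)) ⊗ₖ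
        (h₂ : Matrix (Fin 3) (Fin 3) (ZMod 2))) = 21 := by
  -- The companion matrices of the primitive polynomials `X² + X + 1` and `X³ + X + 1`.
  let A : Matrix (Fin 2) (Fin 2) (ZMod 2) := !![0, 1; 1, 1]
  let B : Matrix (Fin 3) (Fin 3) (ZMod 2) := !![0, 0, 1; 1, 0, 1; 0, 1, 0]
  have hA : A ^ 3 = 1 := by decide
  have hB : B ^ 7 = 1 := by
    have hcube : B ^ 3 = B + 1 := by decide
    calc B ^ 7 = B ^ 3 * B ^ 3 * B := by rw [← pow_add, ← pow_succ]
      _ = 1 := by rw [hcube]; decide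
  have := Fact.mk Nat.prime_three
  have : Fact (Nat.Prime 7) := ⟨by norm_num⟩
  have hordA : orderOf A = 3 := orderOf_eq_prime hA (by decide)
  have hordB : orderOf B = 7 := orderOf_eq_prime hB (by decide)
  refine ⟨.ofPowEqOne A 3 hA (by lia), .ofPowEqOne B 7 hB (by lia), ?_⟩
  rw [Units.val_ofPowEqOne, Units.val_ofPowEqOne,
    orderOf_kronecker_of_coprime (by rw [hordA, hordB]; decide), hordA, hordB]

theorem kronecker_large_order_general :
    (∀ {K : Type*} [Field K] [Finite K] {d₁ d₂ : ℕ}, 2 ≤ d₁ → d₁ < d₂ →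
      ∀ (h₁ : GL (Fin d₁) K) (h₂ : GL (Fin d₂) K),
        Nat.card K ^ (d₁ * d₂ - 1) ≤
            4 * orderOf ((h₁ : Matrix (Fin d₁) (Fin d₁) K) ⊗ₖ
              (h₂ : Matrix (Fin d₂) (Fin d₂) K)) →
        d₁ = 2 ∧ d₂ = 3 ∧ Nat.card K ≤ 4 ∧
          (Nat.card K ^ (d₁ * d₂) ≤
              4 * orderOf ((h₁ : Matrix (Fin d₁) (Fin d₁) K) ⊗ₖ
                (h₂ : Matrix (Fin d₂) (Fin d₂) K)) →
            Nat.card K = 2)) ∧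
    (∃ (h₁ : GL (Fin 2) (ZMod 2)) (h₂ : GL (Fin 3) (ZMod 2)),
      2 ^ 6 ≤ 4 * orderOf ((h₁ : Matrix (Fin 2) (Fin 2) (ZMod 2)) ⊗ₖ
        (h₂ : Matrix (Fin 3) (Fin 3) (ZMod 2)))) := by
  refine ⟨fun {K} _ _ {d₁ d₂} hd₁ hd₁₂ h₁ h₂ h => ?_, ?_⟩
  · have : NeZero d₁ := ⟨by lia⟩
    have : NeZero d₂ := ⟨by lia⟩
    have hq : 2 ≤ Nat.card K := Finite.one_lt_card
    have hbound := orderOf_kronecker_mul_le h₁ h₂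
    simp only [Fintype.card_fin] at hbound
    have hscale {N : ℕ} (hN : N ≤ 4 * orderOf ((h₁ : Matrix (Fin d₁) (Fin d₁) K) ⊗ₖ
        (h₂ : Matrix (Fin d₂) (Fin d₂) K))) :
        N * (Nat.card K - 1) ≤ 4 * ((Nat.card K ^ d₁ - 1) * (Nat.card K ^ d₂ - 1)) :=
      (Nat.mul_le_mul_right _ hN).trans (by rw [mul_assoc]; exact Nat.mul_le_mul_left 4 hbound)
    obtain ⟨rfl, ⟨rfl, hq4⟩ | ⟨rfl, hq2⟩⟩ :=
      eq_two_and_eq_three_or_eq_four_of_pow_mul_le hq hd₁ hd₁₂ (hscale h)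
    · refine ⟨rfl, rfl, hq4, fun h' => ?_⟩
      have hnum := hscale h'
      interval_cases Nat.card K <;> lia
    · have hle := orderOf_kronecker_le_thirty_of_card_eq_two hq2 h₁ h₂
      rw [hq2] at h
      lia
  · obtain ⟨h₁, h₂, h⟩ := exists_orderOf_kronecker_eq_twentyOne
    exact ⟨h₁, h₂, by rw [h]; decide⟩

/-- Lemma on `𝒞₄`-subgroups: For a prime `p` and `2 ≤ d₁ < d₂`, if the
Kronecker product `h₁ ⊗ h₂` of invertible matrices `h₁ ∈ GL_{d₁}(𝔽_p)`,
`h₂ ∈ GL_{d₂}(𝔽_p)` has order at least `p^{d₁d₂ - 1} / 4`, then `(d₁, d₂) = (2, 3)` and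
`p ∈ {2, 3}`.  Moreover `GL₂(𝔽₂) ⊗ GL₃(𝔽₂)` contains an element of order at least
`2⁶ / 4`, while every element of `GL₂(𝔽₃) ⊗ GL₃(𝔽₃)` has order less than `3⁶ / 4`. -/
theorem kronecker_large_order :
    (∀ (p d₁ d₂ : ℕ), p.Prime → 2 ≤ d₁ → d₁ < d₂ →
      ∀ (h₁ : GL (Fin d₁) (ZMod p)) (h₂ : GL (Fin d₂) (ZMod p)),
        p ^ (d₁ * d₂ - 1) ≤
            4 * orderOf (Matrix.kroneckerMap (· * ·)
              (h₁ : Matrix (Fin d₁) (Fin d₁) (ZMod p))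
              (h₂ : Matrix (Fin d₂) (Fin d₂) (ZMod p))) →
        d₁ = 2 ∧ d₂ = 3 ∧ (p = 2 ∨ p = 3)) ∧
    (∃ (h₁ : GL (Fin 2) (ZMod 2)) (h₂ : GL (Fin 3) (ZMod 2)),
      2 ^ 6 ≤ 4 * orderOf (Matrix.kroneckerMap (· * ·)
        (h₁ : Matrix (Fin 2) (Fin 2) (ZMod 2)) (h₂ : Matrix (Fin 3) (Fin 3) (ZMod 2)))) ∧
    (∀ (h₁ : GL (Fin 2) (ZMod 3)) (h₂ : GL (Fin 3) (ZMod 3)),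
      4 * orderOf (Matrix.kroneckerMap (· * ·)
        (h₁ : Matrix (Fin 2) (Fin 2) (ZMod 3)) (h₂ : Matrix (Fin 3) (Fin 3) (ZMod 3)))
        < 3 ^ 6) := by
  obtain ⟨hlarge, hexists⟩ := kronecker_large_order_general
  refine ⟨fun p d₁ d₂ hp hd₁ hd₁₂ h₁ h₂ h => ?_, hexists, fun h₁ h₂ => ?_⟩
  · have : Fact p.Prime := ⟨hp⟩
    obtain ⟨h2, h3, hp4, -⟩ := hlarge hd₁ hd₁₂ h₁ h₂ (by rwa [Nat.card_zmod])
    rw [Nat.card_zmod] at hp4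
    refine ⟨h2, h3, ?_⟩
    interval_cases p <;> revert hp <;> decide
  · by_contra! h
    have hcard : Nat.card (ZMod 3) = 3 := Nat.card_zmod 3
    obtain ⟨-, -, -, hsharp⟩ := hlarge le_rfl (by lia) h₁ h₂ (by rw [hcard]; lia)
    rw [hcard] at hsharp
    exact absurd (hsharp h) (by decide)
end

section
/- Let p ∈ {2, 3}, let m ≥ 3 and t ≥ 2 be integers, and set d = m^t. Let W = 𝔽_p^m, let f : {1, …, t} → GL(W) be a family of linear automorphisms, and let σ be a permutation of {1, …, t}. Let g be the permutation of the set of functions x : {1, …, t} → W defined by (g x)(i) = f(i)(x(σ^{−1}(i))) (an arbitrary element of the wreath product GL_m(p) ≀ Sym(t) acting imprimitively on W^t). Then 4 · orderOf g < p^{d−1}; that is, GL_m(p) ≀ Sym(t) contains no element of order at least p^{d−1}/4. -/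
/-!
Powers of a linear endomorphism `G` of a free module `V` over a finite ring `R` lie in `R[G]`. By
Cayley–Hamilton, `R[G]` is spanned by `rank V` powers of `G`, so it has at most `|R| ^ rank V`
elements, one of which is `0`, not a power of an invertible `G`. Hence the block structure of the
wreath product does not matter: every invertible linear map of `W ^ t` has order less than
`|R| ^ (t * m)`, and the bound follows from `t * m + 3 ≤ m ^ t` and `4 ≤ |R| ^ 2`.
-/

open Algebra Module Polynomial

theorem mul_add_three_le_pow {m t : ℕ} (hm : 3 ≤ m) (ht : 2 ≤ t) : t * m + 3 ≤ m ^ t := by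
  induction t, ht using Nat.le_induction with
  | base => nlinarith
  | succ t _ ih =>
    calc (t + 1) * m + 3 ≤ (t * m + 3) * m := by nlinarith [Nat.zero_le (t * m)]
      _ ≤ m ^ t * m := Nat.mul_le_mul_right m ih
      _ = m ^ (t + 1) := (pow_succ m t).symm

theorem natCard_span_finset_le (R : Type*) {M : Type*} [Semiring R] [Finite R] [AddCommMonoid M]
    [Module R M] (s : Finset M) :
    Nat.card (Submodule.span R (s : Set M)) ≤ Nat.card R ^ s.card := by
  have range_eq : (Fintype.linearCombination R ((↑) : s → M)).range = Submodule.span R s := by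
    simp [Fintype.range_linearCombination]
  calc Nat.card (Submodule.span R (s : Set M))
      = Nat.card (Fintype.linearCombination R ((↑) : s → M)).range := by rw [range_eq]
    _ ≤ Nat.card (s → R) := Finite.card_range_le _
    _ = Nat.card R ^ s.card := by simp [Nat.card_fun]

section MonicRelation

variable {R A : Type*} [CommRing R] [Finite R] [Ring A] [Algebra R A] {x : A} {f : R[X]}

theorem natCard_adjoin_singleton_le (hf : f.Monic) (hfx : aeval x f = 0) :
    Nat.card (adjoin R {x}) ≤ Nat.card R ^ f.natDegree := by
  classical
  let powers : Finset A := (Finset.range f.natDegree).image (x ^ ·)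
  calc Nat.card (adjoin R {x})
      = Nat.card (Submodule.span R (powers : Set A)) := by
        rw [Submodule.span_range_natDegree_eq_adjoin hf hfx]; rfl
    _ ≤ Nat.card R ^ powers.card := natCard_span_finset_le R powers
    _ ≤ Nat.card R ^ f.natDegree :=
        Nat.pow_le_pow_right Nat.card_pos (Finset.card_image_le.trans_eq (Finset.card_range _))

theorem orderOf_lt_natCard_pow_natDegree [Nontrivial A] (hf : f.Monic) (hfx : aeval x f = 0) :
    orderOf x < Nat.card R ^ f.natDegree := by
  have : Module.Finite R (adjoin R {x}) := finite_adjoin_simple_of_isIntegral ⟨f, hf, hfx⟩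
  have : Finite (adjoin R {x}) := Module.finite_of_finite R
  calc orderOf x
      = orderOf (⟨x, self_mem_adjoin_singleton R x⟩ : adjoin R {x}) :=
        orderOf_submonoid (H := (adjoin R {x}).toSubmonoid) ⟨x, self_mem_adjoin_singleton R x⟩
    _ < Nat.card (adjoin R {x}) := orderOf_lt_card _
    _ ≤ Nat.card R ^ f.natDegree := natCard_adjoin_singleton_le hf hfx

end MonicRelation

theorem orderOf_end_lt_natCard_pow_finrank {R V : Type*} [CommRing R] [Finite R] [AddCommGroup V]
    [Module R V] [Module.Free R V] [Module.Finite R V] [Nontrivial V] (G : Module.End R V) :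
    orderOf G < Nat.card R ^ finrank R V := by
  have : Nontrivial R := Module.nontrivial R V
  rw [← G.charpoly_natDegree]
  exact orderOf_lt_natCard_pow_natDegree G.charpoly_monic G.aeval_self_charpoly

theorem orderOf_eq_of_coe_eq {R V : Type*} [Semiring R] [AddCommMonoid V] [Module R V]
    {g : Equiv.Perm V} {G : Module.End R V} (h : ⇑g = G) : orderOf g = orderOf G := by
  refine orderOf_eq_orderOf_iff.mpr fun n => ?_
  simp only [DFunLike.ext'_iff, Equiv.Perm.coe_pow, Module.End.coe_pow, h, Equiv.Perm.coe_one,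
    Module.End.coe_one]

theorem isLinearMap_of_wreath_apply {R ι W : Type*} [Semiring R] [AddCommMonoid W] [Module R W]
    {f : ι → W →ₗ[R] W} {σ : ι → ι} {g : (ι → W) → ι → W}
    (hg : ∀ x i, g x i = f i (x (σ i))) : IsLinearMap R g where
  map_add x y := by ext i; simp [hg]
  map_smul c x := by ext i; simp [hg]

theorem wreath_tensor_no_large_order_general {R ι W : Type*} [CommRing R] [Finite R] [Fintype ι]
    [AddCommGroup W] [Module R W] [Module.Free R W] (hm : 3 ≤ finrank R W)
    (ht : 2 ≤ Fintype.card ι) (g : Equiv.Perm (ι → W)) (hg : IsLinearMap R g) :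
    4 * orderOf g < Nat.card R ^ (finrank R W ^ Fintype.card ι - 1) := by
  have : Nontrivial R := not_subsingleton_iff_nontrivial.mp fun _ => by
    simp [finrank_subsingleton] at hm
  have : Module.Finite R W := Module.finite_of_finrank_pos (by omega)
  have : Nontrivial W := Module.nontrivial_of_finrank_pos (R := R) (by omega)
  have : Nonempty ι := Fintype.card_pos_iff.mp (by omega)
  have order_lt : orderOf g < Nat.card R ^ (Fintype.card ι * finrank R W) := by
    simpa [orderOf_eq_of_coe_eq (G := hg.mk' g) rfl, finrank_pi_fintype] using
      orderOf_end_lt_natCard_pow_finrank (hg.mk' g)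
  have two_le_card : 2 ≤ Nat.card R := Finite.one_lt_card
  have exponent_le := mul_add_three_le_pow hm ht
  calc 4 * orderOf g < 2 ^ 2 * Nat.card R ^ (Fintype.card ι * finrank R W) := by omega
    _ ≤ Nat.card R ^ 2 * Nat.card R ^ (Fintype.card ι * finrank R W) := by gcongr
    _ = Nat.card R ^ (2 + Fintype.card ι * finrank R W) := (pow_add _ _ _).symm
    _ ≤ Nat.card R ^ (finrank R W ^ Fintype.card ι - 1) :=
        Nat.pow_le_pow_right (by omega) (by omega)

/-- Lemma on `𝒞₇`-subgroups: Let `p ∈ {2, 3}`, `m ≥ 3`, `t ≥ 2`,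
`d = m^t`.  Any element `g` of the wreath product `GL_m(p) ≀ Sym(t)` acting imprimitively
on `(𝔽_p^m)^t` — i.e. any permutation of functions `x : Fin t → 𝔽_p^m` of the form
`(g x) i = f i (x (σ⁻¹ i))` — satisfies `4 * orderOf g < p ^ (d - 1)`. -/
theorem wreath_tensor_no_large_order (p m t d : ℕ) (hp : p = 2 ∨ p = 3)
    (hm : 3 ≤ m) (ht : 2 ≤ t) (hd : d = m ^ t)
    (f : Fin t → ((Fin m → ZMod p) ≃ₗ[ZMod p] (Fin m → ZMod p)))
    (σ : Equiv.Perm (Fin t))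
    (g : Equiv.Perm (Fin t → (Fin m → ZMod p)))
    (hg : ∀ (x : Fin t → (Fin m → ZMod p)) (i : Fin t), g x i = f i (x (σ⁻¹ i))) :
    4 * orderOf g < p ^ (d - 1) := by
  have : Fact p.Prime := ⟨by rcases hp with rfl | rfl <;> norm_num⟩
  simpa [hd] using wreath_tensor_no_large_order_general (R := ZMod p) (by simpa) (by simpa) g
    (isLinearMap_of_wreath_apply (f := fun i => f i) hg)
end

section
/- Let m ≥ 3 and r ≥ 1 be integers, set d = m·r, and let V = 𝔽₂^d with an internal direct sum decomposition V = V₁ ⊕ ⋯ ⊕ V_r into h-invariant subspaces each of dimension m, where h is a linear automorphism of V (so h is block diagonal h = h₁ ⊕ ⋯ ⊕ h_r with each hᵢ ∈ GL_m(𝔽₂)). If orderOf h ≥ 2^{d−3}, then 2(r − 5) ≤ π(m), where π(m) denotes the number of primes at most m. -/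
/-!
Over a field with `q` elements, an irreducible factor of degree `n` occurring to a power at most
`a + 1` in the minimal polynomial of an automorphism contributes a divisor of `q ^ a * (q ^ n - 1)`
to its order and takes up at least `n + a` dimensions. So the order of a block automorphism divides
`q ^ a` times the lcm of the numbers `q ^ n - 1`, one for each distinct factor degree `n` in each
block, where `a` is needed only once, for a single worst block.

An order within a factor `q ^ k` of `q ^ dim V` leaves little room. A degree that shares a divisor
with an earlier one costs a factor `q` of the lcm, so all but `k` of the degrees are distinct and
pairwise coprime, and at most `π m + 1` of them can be. On the other hand every block has two
degrees, except for the worst block, at most `k` blocks that waste a dimension, and blocks of the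
single degree `m`, all but one of which repeat a degree. Counting degrees in both ways bounds the
number of blocks.
-/

open Polynomial Module

/-- A common exponent for the polynomials over a field with `q` elements, with nonzero constant
term, whose irreducible factors have degrees in `D` and multiplicities at most `q ^ a`. -/
def exponentBound (q a : ℕ) (D : Finset ℕ) : ℕ :=
  q ^ a * D.lcm fun n ↦ q ^ n - 1

lemma exponentBound_dvd_exponentBound {q a b : ℕ} {D E : Finset ℕ} (hab : a ≤ b) (hDE : D ⊆ E) :
    exponentBound q a D ∣ exponentBound q b E :=
  mul_dvd_mul (pow_dvd_pow q hab) (Finset.lcm_mono hDE)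

lemma exponentBound_pos {q a : ℕ} {D : Finset ℕ} (hq : 1 < q) (hD : 0 ∉ D) :
    0 < exponentBound q a D := by
  refine Nat.mul_pos (by positivity) (Nat.pos_of_ne_zero fun hlcm ↦ ?_)
  obtain ⟨n, hn, hn0⟩ := Finset.lcm_eq_zero_iff.1 hlcm
  exact (Nat.sub_pos_of_lt (Nat.one_lt_pow (ne_of_mem_of_not_mem hn hD) hq)).ne' hn0

section FiniteField

variable {K : Type*} [Field K] [Finite K]

lemma irreducible_dvd_X_pow_sub_one {f : K[X]} (hf : Irreducible f) (hX : ¬ X ∣ f) :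
    f ∣ X ^ (Nat.card K ^ f.natDegree - 1) - 1 := by
  have hdvd : f ∣ X ^ Nat.card K ^ f.natDegree - X :=
    hf.natDegree_dvd_iff_dvd_X_pow_card_pow_sub_X.1 dvd_rfl
  have hfactor : (X : K[X]) ^ Nat.card K ^ f.natDegree - X
      = X * (X ^ (Nat.card K ^ f.natDegree - 1) - 1) := by
    rw [mul_sub_one, mul_pow_sub_one (pow_pos Nat.card_pos _).ne']
  rw [hfactor] at hdvd
  exact (hf.prime.dvd_or_dvd hdvd).resolve_left fun h ↦
    hX (hf.associated_of_dvd irreducible_X h).symm.dvd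

lemma X_pow_card_pow_sub_one (N a : ℕ) :
    (X : K[X]) ^ (N * Nat.card K ^ a) - 1 = (X ^ N - 1) ^ Nat.card K ^ a := by
  have := Fintype.ofFinite K
  obtain ⟨p, _, n, hp, hcard⟩ := FiniteField.card' K
  have : Fact p.Prime := ⟨hp⟩
  rw [Nat.card_eq_fintype_card, hcard, ← pow_mul, sub_pow_char_pow, one_pow, pow_mul]

lemma irreducible_pow_succ_dvd_X_pow_exponentBound_sub_one {f : K[X]} (hf : Irreducible f)
    (hX : ¬ X ∣ f) (a : ℕ) :
    f ^ (a + 1) ∣ X ^ exponentBound (Nat.card K) a {f.natDegree} - 1 := by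
  have hle : a + 1 ≤ Nat.card K ^ a := Nat.lt_pow_self Finite.one_lt_card
  rw [exponentBound, Finset.lcm_singleton, normalize_eq, mul_comm, X_pow_card_pow_sub_one]
  exact (pow_dvd_pow f hle).trans (pow_dvd_pow_of_dvd (irreducible_dvd_X_pow_sub_one hf hX) _)

lemma exists_dvd_X_pow_exponentBound_sub_one (p : K[X]) (hX : ¬ X ∣ p) :
    ∃ (a : ℕ) (D : Finset ℕ), 0 ∉ D ∧ (p.natDegree ≠ 0 → D.Nonempty) ∧
      a + ∑ n ∈ D, n ≤ p.natDegree ∧ p ∣ X ^ exponentBound (Nat.card K) a D - 1 := by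
  induction p using UniqueFactorizationMonoid.induction_on_coprime with
  | h0 => exact absurd (dvd_zero X) hX
  | h1 hu => exact ⟨0, ∅, by simp, by simp [natDegree_eq_zero_of_isUnit hu], by simp, hu.dvd⟩
  | @hpr f i hf =>
    obtain _ | a := i
    · exact ⟨0, ∅, by simp⟩
    have hirr := hf.irreducible
    have hXf : ¬ X ∣ f := fun h ↦ hX (h.trans (dvd_pow_self f a.succ_ne_zero))
    refine ⟨a, {f.natDegree}, ?_, fun _ ↦ Finset.singleton_nonempty _, ?_,
      irreducible_pow_succ_dvd_X_pow_exponentBound_sub_one hirr hXf a⟩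
    · simpa using hirr.natDegree_pos.ne
    · rw [Finset.sum_singleton, natDegree_pow, add_one_mul]
      gcongr
      exact Nat.le_mul_of_pos_right a hirr.natDegree_pos
  | @hcp x y hxy ihx ihy =>
    obtain ⟨a, D, hD0, hDne, hDsum, hxdvd⟩ := ihx fun h ↦ hX (h.mul_right y)
    obtain ⟨b, E, hE0, hEne, hEsum, hydvd⟩ := ihy fun h ↦ hX (h.mul_left x)
    have hxy0 : x * y ≠ 0 := fun h ↦ hX (h ▸ dvd_zero X)
    have hdeg := natDegree_mul (left_ne_zero_of_mul hxy0) (right_ne_zero_of_mul hxy0)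
    refine ⟨a + b, D ∪ E, by simp [hD0, hE0], fun hxy ↦ ?_, ?_, ?_⟩
    · have : x.natDegree ≠ 0 ∨ y.natDegree ≠ 0 := by omega
      exact Finset.union_nonempty.2 (this.imp hDne hEne)
    · have := Finset.sum_union_inter (s₁ := D) (s₂ := E) (f := id)
      simp only [id] at this
      omega
    · exact hxy.isCoprime.mul_dvd
        (hxdvd.trans <| dvd_pow_sub_one_of_dvd <|
          exponentBound_dvd_exponentBound (a.le_add_right b) Finset.subset_union_left)
        (hydvd.trans <| dvd_pow_sub_one_of_dvd <|
          exponentBound_dvd_exponentBound (b.le_add_left a) Finset.subset_union_right)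

lemma exists_orderOf_dvd_exponentBound {W : Type*} [AddCommGroup W] [Module K W]
    [Module.Finite K W] [Nontrivial W] {g : End K W} (hg : Function.Injective g) :
    ∃ (a : ℕ) (D : Finset ℕ), 0 ∉ D ∧ D.Nonempty ∧ a + ∑ n ∈ D, n ≤ finrank K W ∧
      orderOf g ∣ exponentBound (Nat.card K) a D := by
  have hX : ¬ X ∣ minpoly K g :=
    X_dvd_iff.not.2 (LinearMap.minpoly_coeff_zero_of_injective hg)
  obtain ⟨a, D, hD0, hDne, hDsum, hdvd⟩ := exists_dvd_X_pow_exponentBound_sub_one _ hX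
  have hdeg : (minpoly K g).natDegree ≤ finrank K W := by
    rw [← g.charpoly_natDegree]
    exact natDegree_le_of_dvd g.minpoly_dvd_charpoly g.charpoly_monic.ne_zero
  refine ⟨a, D, hD0, hDne (minpoly.natDegree_pos (Algebra.IsIntegral.isIntegral g)).ne',
    hDsum.trans hdeg, orderOf_dvd_of_pow_eq_one ?_⟩
  simpa [sub_eq_zero] using aeval_eq_zero_of_dvd_aeval_eq_zero hdvd (minpoly.aeval K g)

end FiniteField

lemma orderOf_dvd_of_orderOf_restrict_dvd {R V ι : Type*} [Semiring R] [AddCommMonoid V]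
    [Module R V] {W : ι → Submodule R V} (hW : ⨆ i, W i = ⊤) {f : End R V}
    (hf : ∀ i, ∀ x ∈ W i, f x ∈ W i) {N : ℕ} (hN : ∀ i, orderOf (f.restrict (hf i)) ∣ N) :
    orderOf f ∣ N := by
  have hle : ∀ i, W i ≤ LinearMap.eqLocus (f ^ N) 1 := fun i x hx ↦ by
    have hfix := DFunLike.congr_fun (orderOf_dvd_iff_pow_eq_one.1 (hN i)) ⟨x, hx⟩
    rw [End.pow_restrict] at hfix
    exact congrArg Subtype.val hfix
  exact orderOf_dvd_of_pow_eq_one (LinearMap.eqLocus_eq_top.1 (top_le_iff.1 (hW ▸ iSup_le hle)))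

lemma lcm_pow_sub_one_mul_le {b n k L : ℕ} (hb : 1 < b) (hk : b ^ k - 1 ∣ L)
    (hnk : n = k ∨ ¬ n.Coprime k) : (b ^ n - 1).lcm L * b ≤ b ^ n * L := by
  rcases eq_or_ne n k with rfl | hne
  · rw [Nat.lcm_eq_right hk, mul_comm]
    rcases n.eq_zero_or_pos with rfl | hn
    · simp_all
    · exact Nat.mul_le_mul_right L (Nat.le_self_pow hn.ne' b)
  rcases L.eq_zero_or_pos with rfl | hL
  · simp
  have hgcd : 2 ≤ n.gcd k :=
    (Nat.two_le_iff _).2 ⟨fun h ↦ hne (by simp_all [Nat.gcd_eq_zero_iff]), hnk.resolve_left hne⟩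
  have hb_le : b ≤ (b ^ n - 1).gcd L := calc
    b ≤ b ^ 2 - 1 := Nat.le_sub_one_of_lt (by nlinarith)
    _ ≤ b ^ n.gcd k - 1 := Nat.sub_le_sub_right (Nat.pow_le_pow_right hb.le hgcd) 1
    _ ≤ (b ^ n - 1).gcd L := Nat.le_of_dvd (Nat.gcd_pos_of_pos_right _ hL) <| Nat.dvd_gcd
      (Nat.pow_sub_one_dvd_pow_sub_one b (n.gcd_dvd_left k))
      ((Nat.pow_sub_one_dvd_pow_sub_one b (n.gcd_dvd_right k)).trans hk)
  calc (b ^ n - 1).lcm L * b ≤ (b ^ n - 1).lcm L * (b ^ n - 1).gcd L := by gcongr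
    _ = (b ^ n - 1) * L := by rw [mul_comm, Nat.gcd_mul_lcm]
    _ ≤ b ^ n * L := Nat.mul_le_mul_right L (Nat.sub_le _ _)

lemma exists_pairwise_coprime_subset_lcm_mul_pow_card_le {ι : Type*} {b : ℕ} (hb : 1 < b)
    (f : ι → ℕ) (T : Finset ι) :
    ∃ C ⊆ T, Set.InjOn f C ∧ (f '' C).Pairwise Nat.Coprime ∧
      (T.lcm fun x ↦ b ^ f x - 1) * b ^ T.card ≤ b ^ (∑ x ∈ T, f x + C.card) := by
  classical
  induction T using Finset.induction_on with
  | empty => exact ⟨∅, by simp⟩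
  | insert x T hx ih =>
    obtain ⟨C, hCT, hinj, hcop, hle⟩ := ih
    set L := T.lcm fun x ↦ b ^ f x - 1
    rw [Finset.lcm_insert, lcm_eq_nat_lcm, Finset.sum_insert hx, Finset.card_insert_of_notMem hx]
    by_cases hC : ∃ y ∈ C, f x = f y ∨ ¬ (f x).Coprime (f y)
    · obtain ⟨y, hy, hxy⟩ := hC
      refine ⟨C, hCT.trans (Finset.subset_insert x T), hinj, hcop, ?_⟩
      calc (b ^ f x - 1).lcm L * b ^ (T.card + 1)
          = (b ^ f x - 1).lcm L * b * b ^ T.card := by ring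
        _ ≤ b ^ f x * L * b ^ T.card :=
          Nat.mul_le_mul_right _ (lcm_pow_sub_one_mul_le hb (Finset.dvd_lcm (hCT hy)) hxy)
        _ ≤ b ^ f x * b ^ (∑ x ∈ T, f x + C.card) := by rw [mul_assoc]; gcongr
        _ = b ^ (f x + ∑ x ∈ T, f x + C.card) := by rw [← pow_add, add_assoc]
    · push Not at hC
      have hxC : x ∉ C := fun h ↦ hx (hCT h)
      refine ⟨insert x C, Finset.insert_subset_insert x hCT, ?_, ?_, ?_⟩
      · rw [Finset.coe_insert, Set.injOn_insert (Finset.mem_coe.not.2 hxC)]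
        exact ⟨hinj, fun ⟨y, hy, hyx⟩ ↦ (hC y hy).1 hyx.symm⟩
      · rw [Finset.coe_insert, Set.image_insert_eq, Set.pairwise_insert_of_symm]
        exact ⟨hcop, Set.forall_mem_image.2 fun y hy _ ↦ (hC y hy).2⟩
      · have hlcm : (b ^ f x - 1).lcm L ≤ b ^ f x * L := calc
          (b ^ f x - 1).lcm L ≤ (b ^ f x - 1) * L := Nat.div_le_self _ _
          _ ≤ b ^ f x * L := Nat.mul_le_mul_right L (Nat.sub_le _ _)
        calc (b ^ f x - 1).lcm L * b ^ (T.card + 1)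
            ≤ b ^ f x * L * b ^ (T.card + 1) := by gcongr
          _ = b ^ (f x + 1) * (L * b ^ T.card) := by ring
          _ ≤ b ^ (f x + 1) * b ^ (∑ x ∈ T, f x + C.card) := by gcongr
          _ = b ^ (f x + ∑ x ∈ T, f x + (insert x C).card) := by
            rw [Finset.card_insert_of_notMem hxC]; ring

lemma card_le_primeCounting_add_one_of_pairwise_coprime {S : Finset ℕ} {m : ℕ} (hS0 : 0 ∉ S)
    (hSm : ∀ n ∈ S, n ≤ m) (hS : (S : Set ℕ).Pairwise Nat.Coprime) :
    S.card ≤ Nat.primeCounting m + 1 := by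
  have herase : (S.erase 1).card ≤ Nat.primeCounting m := by
    rw [← Nat.primesLE_card_eq_primeCounting]
    refine Finset.card_le_card_of_injOn Nat.minFac (fun n hn ↦ ?_) fun n hn n' hn' heq ↦ ?_
    · obtain ⟨hn1, hnS⟩ := Finset.mem_erase.1 hn
      have hn0 : 0 < n := Nat.pos_of_ne_zero (ne_of_mem_of_not_mem hnS hS0)
      exact Nat.mem_primesLE.2 ⟨(Nat.minFac_le hn0).trans (hSm n hnS), Nat.minFac_prime hn1⟩
    · obtain ⟨hn1, hnS⟩ := Finset.mem_erase.1 hn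
      by_contra hne
      exact Nat.not_coprime_of_dvd_of_dvd (Nat.minFac_prime hn1).one_lt n.minFac_dvd
        (heq ▸ n'.minFac_dvd) (hS hnS (Finset.mem_of_mem_erase hn') hne)
  have := S.pred_card_le_card_erase (a := 1)
  omega

section Counting

variable {ι : Type*} [Fintype ι] {m : ℕ} {D : ι → Finset ℕ}

lemma two_add_sum_le_card_add_ite {E : Finset ℕ} (hE : E.Nonempty) (hsum : ∑ n ∈ E, n ≤ m) :
    2 + ∑ n ∈ E, n ≤ E.card + m + if E = {m} then 1 else 0 := by
  rcases hE.card_pos.nat_succ_le.eq_or_lt with hcard | hcard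
  · obtain ⟨n, rfl⟩ := Finset.card_eq_one.1 hcard.symm
    simp only [Finset.sum_singleton, Finset.card_singleton, Finset.singleton_inj] at hsum ⊢
    split_ifs <;> omega
  · omega

lemma two_mul_card_add_sum_le {a : ι → ℕ} (hne : ∀ i, (D i).Nonempty)
    (hsum : ∀ i, a i + ∑ n ∈ D i, n ≤ m) (i₀ : ι) :
    2 * Fintype.card ι + a i₀ + ∑ i, ∑ n ∈ D i, n ≤
      ∑ i, (D i).card + m * Fintype.card ι + (Finset.univ.filter (D · = {m})).card + 2 := by
  classical
  have hblock : ∀ i, 2 + (if i = i₀ then a i else 0) + ∑ n ∈ D i, n ≤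
      (D i).card + m + (if D i = {m} then 1 else 0) + if i = i₀ then 2 else 0 := fun i ↦ by
    have := hsum i
    have := two_add_sum_le_card_add_ite (hne i) (by omega : ∑ n ∈ D i, n ≤ m)
    split_ifs at this ⊢ <;> omega
  have htotal := Finset.sum_le_sum fun i (_ : i ∈ Finset.univ) ↦ hblock i
  simp only [Finset.sum_add_distrib, Finset.sum_ite_eq', Finset.mem_univ, if_true,
    Finset.sum_const, Finset.card_univ, smul_eq_mul, ← Finset.card_filter] at htotal
  linarith

lemma card_filter_eq_singleton_add_card_le {C : Finset (Σ _ : ι, ℕ)}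
    (hC : C ⊆ Finset.univ.sigma D) (hinj : Set.InjOn Sigma.snd (C : Set (Σ _ : ι, ℕ))) :
    (Finset.univ.filter (D · = {m})).card + C.card ≤ (Finset.univ.sigma D).card + 1 := by
  classical
  set F := (Finset.univ.filter (D · = {m})).image fun i ↦ (⟨i, m⟩ : Σ _ : ι, ℕ)
  have hF : F ⊆ Finset.univ.sigma D := by
    simp only [F, Finset.image_subset_iff, Finset.mem_filter, Finset.mem_sigma]
    rintro i ⟨hi, hD⟩
    exact ⟨hi, hD ▸ Finset.mem_singleton_self m⟩
  have hFcard : F.card = (Finset.univ.filter (D · = {m})).card :=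
    Finset.card_image_of_injective _ fun i j hij ↦ congrArg Sigma.fst hij
  have hsnd : ∀ t ∈ F, t.2 = m := by simp [F]
  have hinter : (F ∩ C).card ≤ 1 := Finset.card_le_one.2 fun t ht u hu ↦ by
    rw [Finset.mem_inter] at ht hu
    exact hinj ht.2 hu.2 ((hsnd t ht.1).trans (hsnd u hu.1).symm)
  have hunion := Finset.card_le_card (Finset.union_subset hF hC)
  have := Finset.card_union_add_card_inter F C
  omega

lemma exists_subset_sigma_of_pow_le_exponentBound {q k d a : ℕ} (hq : 1 < q)
    (hpow : q ^ d ≤ q ^ k * exponentBound q a (Finset.univ.biUnion D)) :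
    ∃ C ⊆ Finset.univ.sigma D, Set.InjOn Sigma.snd (C : Set (Σ _ : ι, ℕ)) ∧
      (Sigma.snd '' (C : Set (Σ _ : ι, ℕ))).Pairwise Nat.Coprime ∧
      d + (Finset.univ.sigma D).card ≤ k + a + ∑ i, ∑ n ∈ D i, n + C.card := by
  set T := Finset.univ.sigma D with hT
  have hlcm : (Finset.univ.biUnion D).lcm (fun n ↦ q ^ n - 1) = T.lcm fun t ↦ q ^ t.2 - 1 := by
    have himage : Finset.univ.biUnion D = T.image Sigma.snd := by ext; simp [hT]
    rw [himage, Finset.lcm_image, Function.comp_def]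
  obtain ⟨C, hCT, hinj, hcop, hle⟩ :=
    exists_pairwise_coprime_subset_lcm_mul_pow_card_le hq (Sigma.snd : (Σ _ : ι, ℕ) → ℕ) T
  refine ⟨C, hCT, hinj, hcop, (Nat.pow_le_pow_iff_right hq).1 ?_⟩
  calc q ^ (d + T.card)
      ≤ q ^ k * (q ^ a * T.lcm fun t ↦ q ^ t.2 - 1) * q ^ T.card := by
        rw [pow_add, ← hlcm]
        exact Nat.mul_le_mul_right _ hpow
    _ = q ^ (k + a) * ((T.lcm fun t ↦ q ^ t.2 - 1) * q ^ T.card) := by ring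
    _ ≤ q ^ (k + a) * q ^ (∑ t ∈ T, t.2 + C.card) := by gcongr
    _ = q ^ (k + a + ∑ i, ∑ n ∈ D i, n + C.card) := by
      rw [← pow_add, Finset.sum_sigma, ← add_assoc]

lemma card_le_primeCounting_add_one_of_subset_sigma {C : Finset (Σ _ : ι, ℕ)}
    (h0 : ∀ i, 0 ∉ D i) (hDm : ∀ i, ∀ n ∈ D i, n ≤ m) (hC : C ⊆ Finset.univ.sigma D)
    (hinj : Set.InjOn Sigma.snd (C : Set (Σ _ : ι, ℕ)))
    (hcop : (Sigma.snd '' (C : Set (Σ _ : ι, ℕ))).Pairwise Nat.Coprime) :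
    C.card ≤ Nat.primeCounting m + 1 := by
  have hmem : ∀ t ∈ C, t.2 ∈ D t.1 := fun t ht ↦ (Finset.mem_sigma.1 (hC ht)).2
  rw [← Finset.card_image_of_injOn hinj]
  refine card_le_primeCounting_add_one_of_pairwise_coprime (fun hzero ↦ ?_)
    (Finset.forall_mem_image.2 fun t ht ↦ hDm t.1 t.2 (hmem t ht)) (by simpa using hcop)
  obtain ⟨t, ht, ht0⟩ := Finset.mem_image.1 hzero
  exact h0 t.1 (ht0 ▸ hmem t ht)

lemma two_mul_card_le_of_pow_le_exponentBound {q k : ℕ} {a : ι → ℕ} (hq : 1 < q)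
    (h0 : ∀ i, 0 ∉ D i) (hne : ∀ i, (D i).Nonempty) (hsum : ∀ i, a i + ∑ n ∈ D i, n ≤ m) (i₀ : ι)
    (hpow : q ^ (m * Fintype.card ι) ≤
      q ^ k * exponentBound q (a i₀) (Finset.univ.biUnion D)) :
    2 * Fintype.card ι ≤ Nat.primeCounting m + 2 * k + 4 := by
  obtain ⟨C, hCD, hinj, hcop, hexp⟩ := exists_subset_sigma_of_pow_le_exponentBound hq hpow
  have hprimes : C.card ≤ Nat.primeCounting m + 1 :=
    card_le_primeCounting_add_one_of_subset_sigma h0 (fun i n hn ↦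
      (Finset.single_le_sum_of_canonicallyOrdered (f := fun n ↦ n) hn).trans
        (le_of_add_le_right (hsum i))) hCD hinj hcop
  have hdim : a i₀ + ∑ i, ∑ n ∈ D i, n ≤ m * Fintype.card ι := calc
    a i₀ + ∑ i, ∑ n ∈ D i, n ≤ ∑ i, (a i + ∑ n ∈ D i, n) := by
      rw [Finset.sum_add_distrib]
      gcongr
      exact Finset.single_le_sum_of_canonicallyOrdered (Finset.mem_univ i₀)
    _ ≤ m * Fintype.card ι := by
      simpa [mul_comm] using Finset.sum_le_card_nsmul Finset.univ _ m fun i _ ↦ hsum i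
  have hblocks := two_mul_card_add_sum_le hne hsum i₀
  have hfull := card_filter_eq_singleton_add_card_le (m := m) hCD hinj
  rw [← Finset.card_sigma] at hblocks
  omega

end Counting

lemma exists_orderOf_le_exponentBound_biUnion {K V ι : Type*} [Field K] [Finite K]
    [AddCommGroup V] [Module K V] [Fintype ι] [Nonempty ι] {W : ι → Submodule K V}
    (hW : ⨆ i, W i = ⊤) {m : ℕ} (hm : 0 < m) (hdim : ∀ i, finrank K (W i) = m) {f : End K V}
    (hf : Function.Injective f) (hinv : ∀ i, ∀ x ∈ W i, f x ∈ W i) :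
    ∃ (a : ι → ℕ) (D : ι → Finset ℕ) (i₀ : ι), (∀ i, 0 ∉ D i) ∧ (∀ i, (D i).Nonempty) ∧
      (∀ i, a i + ∑ n ∈ D i, n ≤ m) ∧
      orderOf f ≤ exponentBound (Nat.card K) (a i₀) (Finset.univ.biUnion D) := by
  have hblock : ∀ i, ∃ (a : ℕ) (D : Finset ℕ), 0 ∉ D ∧ D.Nonempty ∧ a + ∑ n ∈ D, n ≤ m ∧
      orderOf (f.restrict (hinv i)) ∣ exponentBound (Nat.card K) a D := fun i ↦ by
    have hpos : 0 < finrank K (W i) := hdim i ▸ hm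
    have := Module.finite_of_finrank_pos hpos
    have := Module.nontrivial_of_finrank_pos hpos
    have hinj : Function.Injective (f.restrict (hinv i)) :=
      fun x y hxy ↦ Subtype.ext (hf (congrArg Subtype.val hxy))
    exact hdim i ▸ exists_orderOf_dvd_exponentBound hinj
  choose a D h0 hne hsum hdvd using hblock
  obtain ⟨i₀, hi₀⟩ := Finite.exists_max a
  have hbound := orderOf_dvd_of_orderOf_restrict_dvd hW hinv fun i ↦
    (hdvd i).trans <| exponentBound_dvd_exponentBound (hi₀ i) <|
      Finset.subset_biUnion_of_mem D (Finset.mem_univ i)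
  exact ⟨a, D, i₀, h0, hne, hsum,
    Nat.le_of_dvd (exponentBound_pos Finite.one_lt_card (by simpa using h0)) hbound⟩

theorem block_diagonal_order_prime_counting_general {K V ι : Type*} [Field K] [Finite K]
    [AddCommGroup V] [Module K V] [Fintype ι] {W : ι → Submodule K V} (hW : ⨆ i, W i = ⊤)
    {m k : ℕ} (hm : 0 < m) (hdim : ∀ i, finrank K (W i) = m) (h : V ≃ₗ[K] V)
    (hinv : ∀ i, ∀ x ∈ W i, h x ∈ W i)
    (hord : Nat.card K ^ (m * Fintype.card ι - k) ≤ orderOf h) :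
    2 * Fintype.card ι ≤ Nat.primeCounting m + 2 * k + 4 := by
  rcases isEmpty_or_nonempty ι with _ | _
  · simp
  obtain ⟨a, D, i₀, h0, hne, hsum, hbound⟩ :=
    exists_orderOf_le_exponentBound_biUnion (f := h.toLinearMap) hW hm hdim h.injective hinv
  have horder : orderOf h.toLinearMap = orderOf h := orderOf_injective
    LinearEquiv.automorphismGroup.toLinearMapMonoidHom LinearEquiv.toLinearMap_injective h
  refine two_mul_card_le_of_pow_le_exponentBound (Finite.one_lt_card (α := K)) h0 hne hsum i₀ ?_
  calc Nat.card K ^ (m * Fintype.card ι)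
      ≤ Nat.card K ^ (k + (m * Fintype.card ι - k)) :=
        Nat.pow_le_pow_right Nat.card_pos le_add_tsub
    _ = Nat.card K ^ k * Nat.card K ^ (m * Fintype.card ι - k) := pow_add _ _ _
    _ ≤ Nat.card K ^ k * exponentBound (Nat.card K) (a i₀) (Finset.univ.biUnion D) :=
        Nat.mul_le_mul_left _ (hord.trans (horder ▸ hbound))

/-- Remark 2 bound: Let `d = m * r` with `m ≥ 3`, `r ≥ 1`, and let `h` be
a block-diagonal linear automorphism of a `d`-dimensional `𝔽₂`-space preserving each
summand of an internal direct sum decomposition `V = V₁ ⊕ ⋯ ⊕ V_r` into subspaces of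
dimension `m`.  If `orderOf h ≥ 2 ^ (d - 3)`, then `2 * (r - 5) ≤ π(m)`, the number of
primes at most `m`. -/
theorem block_diagonal_order_prime_counting (m r d : ℕ) (hm : 3 ≤ m) (hr : 1 ≤ r)
    (hd : d = m * r)
    (V : Type*) [AddCommGroup V] [Module (ZMod 2) V] [Module.Finite (ZMod 2) V]
    (hdim : Module.finrank (ZMod 2) V = d)
    (Vs : Fin r → Submodule (ZMod 2) V) (hint : DirectSum.IsInternal Vs)
    (hdims : ∀ i, Module.finrank (ZMod 2) (Vs i) = m)
    (h : V ≃ₗ[ZMod 2] V) (hinv : ∀ i, ∀ x ∈ Vs i, h x ∈ Vs i)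
    (hord : 2 ^ (d - 3) ≤ orderOf h) :
    2 * (r - 5) ≤ Nat.primeCounting m := by
  have hcard := block_diagonal_order_prime_counting_general (k := 3) hint.submodule_iSup_eq_top
    (by omega) hdims h hinv (by simpa [hd] using hord)
  rw [Fintype.card_fin] at hcard
  omega
end
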